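/- Let C > 103/4 and suppose n > 4096, n > C/3 + 10/3 and n > (C/3 − 13/12)·log n. Let (X_t) be the Gibbs sampler on Δ_G started from an arbitrary deterministic point X_0 = x ∈ Δ_G. Then for every integer T > (8C/γ̂)·log n, ‖L(X_T) − U_G‖_TV ≤ 7·n^{4.5 − C/6}. -/

import Mathlib

open MeasureTheory

noncomputable section

/-- Uniform probability measure on a finset. -/
def unifOn {α : Type*} [MeasurableSpace α] (s : Finset α) : Measure α :=
  (s.card : ENNReal)⁻¹ • ∑ a ∈ s, Measure.dirac a

/-- Total variation distance between two measures. -/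
def tvDist {α : Type*} [MeasurableSpace α] (μ ν : Measure α) : ℝ :=
  ⨆ A : {A : Set α // MeasurableSet A}, ((μ A).toReal - (ν A).toReal)

variable (G : Type*) [Group G] [Fintype G] [DecidableEq G] [MeasurableSpace G]
  [DiscreteMeasurableSpace G]

/-- The simplex of probability vectors indexed by `G`. -/
def simplexG : Set (G → ℝ) := {x | (∀ g, 0 ≤ x g) ∧ ∑ g, x g = 1}

/-- The uniform (normalized `(n-1)`-dimensional Hausdorff) measure on the simplex. -/
def UG : Measure (G → ℝ) :=
  (μH[(Fintype.card G : ℝ) - 1] (simplexG G))⁻¹ •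
    (μH[(Fintype.card G : ℝ) - 1]).restrict (simplexG G)

/-- One step of the Gibbs sampler on the simplex from update datum `(g, r, λ)`. -/
def gibbsStepG (x : G → ℝ) (u : G × G × ℝ) : G → ℝ := fun h =>
  if h = u.1 then u.2.2 * (x u.1 + x (u.1 * u.2.1))
  else if h = u.1 * u.2.1 then (1 - u.2.2) * (x u.1 + x (u.1 * u.2.1))
  else x h

/-- Law of the random update datum: `g` uniform on `G`, `r` uniform on `R`,
`λ` uniform on `[0,1]`. -/
def driveG (R : Finset G) : Measure (G × G × ℝ) :=
  (unifOn (Finset.univ : Finset G)).prod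
    ((unifOn R).prod ((volume : Measure ℝ).restrict (Set.Icc 0 1)))

/-- Law of the Gibbs sampler after `T` steps started at `x`. -/
def lawG (R : Finset G) (x : G → ℝ) (T : ℕ) : Measure (G → ℝ) :=
  Measure.map (fun ω : Fin T → G × G × ℝ => (List.ofFn ω).foldl (gibbsStepG G) x)
    (Measure.pi fun _ => driveG G R)

/-- The transition matrix of the slowed simple random walk on `G`. -/
def KhatM (R : Finset G) : G → G → ℝ := fun z w =>
  if z = w then 1 - 2 / (Fintype.card G : ℝ)
  else if z⁻¹ * w ∈ R then 2 / ((Fintype.card G : ℝ) * R.card) else 0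

/-- The spectral gap `γ̂ = 1 - λ̂₂` of `K̂`, with the second-largest eigenvalue
expressed by the variational (Courant–Fischer) characterization. -/
def gapHat (R : Finset G) : ℝ :=
  1 - sSup {lam : ℝ | ∃ v : G → ℝ, ∑ g, v g = 0 ∧ ∑ g, (v g) ^ 2 = 1 ∧
    lam = ∑ g, ∑ h, v g * KhatM G R g h * v h}


section PhaseTwo

variable {α : Type*} [DecidableEq α]

/-- Resampling of the coordinates `a`, `b` with parameter `l`. -/
def st (a b : α) (l : ℝ) (x : α → ℝ) : α → ℝ := fun h =>
  if h = a then l * (x a + x b) else if h = b then (1 - l) * (x a + x b) else x h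

/-- Resampling of the coordinates `a`, `b`, with new value `v` at `a`. -/
def stv (a b : α) (v : ℝ) (x : α → ℝ) : α → ℝ := fun h =>
  if h = a then v else if h = b then x a + x b - v else x h

lemma st_eq_stv (a b : α) (l : ℝ) (x : α → ℝ) :
    st a b l x = stv a b ((x a + x b) * l) x := by
  funext h
  simp only [st, stv]
  split_ifs <;> ring

/-- Lebesgue measure on the unit interval. -/
abbrev I01 : Measure ℝ := (volume : Measure ℝ).restrict (Set.Icc 0 1)

instance I01_prob : IsProbabilityMeasure I01 := ⟨by simp [I01]⟩

lemma measurable_st (a b : α) : Measurable (fun p : (α → ℝ) × ℝ => st a b p.2 p.1) := by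
  refine measurable_pi_iff.2 fun h => ?_
  simp only [st]
  split_ifs <;> fun_prop

lemma measurable_stv (a b : α) : Measurable (fun p : (α → ℝ) × ℝ => stv a b p.2 p.1) := by
  refine measurable_pi_iff.2 fun h => ?_
  simp only [stv]
  split_ifs <;> fun_prop

/-- Expectation of `φ` after the updates along the edges of the list. -/
def ev : List (α × α) → ((α → ℝ) → ENNReal) → (α → ℝ) → ENNReal
  | [], φ, x => φ x
  | (e :: L), φ, x => ∫⁻ l, ev L φ (st e.1 e.2 l x) ∂I01

/-- Component labels. -/
def lab : List (α × α) → α → α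
  | [] => fun g => g
  | e :: L => fun g => if lab L g = lab L e.2 then lab L e.1 else lab L g

/-- Coupling error. -/
def err (ε : ℝ) : List (α × α) → (α → ℝ) → ENNReal
  | [], _ => 0
  | e :: L, y => ∫⁻ l, ((if lab L e.1 = lab L e.2 then 0 else
      if (st e.1 e.2 l y) e.1 < 3 * ε then 1 else 0) + err ε L (st e.1 e.2 l y)) ∂I01

lemma measurable_ev (L : List (α × α)) (φ : (α → ℝ) → ENNReal) (hφ : Measurable φ) :
    Measurable (ev L φ) := by
  induction L with
  | nil => exact hφ
  | cons e L ih =>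
    exact Measurable.lintegral_prod_right' (f := fun p : (α → ℝ) × ℝ => ev L φ (st e.1 e.2 p.2 p.1))
      (ih.comp (measurable_st e.1 e.2))

lemma ev_le_one (L : List (α × α)) (φ : (α → ℝ) → ENNReal) (hφ : ∀ x, φ x ≤ 1) (x : α → ℝ) :
    ev L φ x ≤ 1 := by
  induction L generalizing x with
  | nil => exact hφ x
  | cons e L ih =>
    calc ev (e :: L) φ x ≤ ∫⁻ l, 1 ∂I01 := lintegral_mono fun l => ih _
      _ = 1 := by simp

lemma measurable_bad (e : α × α) (L : List (α × α)) (ε : ℝ) : Measurable (fun y : α → ℝ =>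
    (if lab L e.1 = lab L e.2 then (0 : ENNReal) else if y e.1 < 3 * ε then 1 else 0)) := by
  split_ifs
  · exact measurable_const
  · exact Measurable.ite (measurableSet_lt (measurable_pi_apply _) measurable_const)
      measurable_const measurable_const

lemma measurable_err (ε : ℝ) (L : List (α × α)) :
    Measurable (err ε L) := by
  induction L with
  | nil => exact measurable_const
  | cons e L ih =>
    exact Measurable.lintegral_prod_right' (f := fun p : (α → ℝ) × ℝ =>
      ((if lab L e.1 = lab L e.2 then 0 else
      if (st e.1 e.2 p.2 p.1) e.1 < 3 * ε then 1 else 0) + err ε L (st e.1 e.2 p.2 p.1)))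
      (((measurable_bad e L ε).add ih).comp (measurable_st e.1 e.2))

lemma sum_split {M : Type*} [AddCommGroup M] (S : Finset α) (p q : α) (hpq : p ≠ q) (F : α → M) :
    ∑ g ∈ S, F g = ∑ g ∈ (S.erase p).erase q, F g + (if p ∈ S then F p else 0)
      + (if q ∈ S then F q else 0) := by
  have h1 : ∀ (S : Finset α) (p : α), ∑ g ∈ S, F g
      = ∑ g ∈ S.erase p, F g + (if p ∈ S then F p else 0) := by
    intro S p
    split_ifs with h
    · rw [Finset.sum_erase_add _ _ h]
    · rw [Finset.erase_eq_of_notMem h, add_zero]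
  rw [h1 S p, h1 (S.erase p) q]
  have : (q ∈ S.erase p) = (q ∈ S) := by simp [hpq.symm]
  simp only [this]
  abel

lemma sum_erase_stv {M : Type*} [AddCommGroup M] (S : Finset α) (p q : α) (F : α → M) (H : α → M)
    (hFH : ∀ g, g ≠ p → g ≠ q → F g = H g) :
    ∑ g ∈ (S.erase p).erase q, F g = ∑ g ∈ (S.erase p).erase q, H g := by
  refine Finset.sum_congr rfl fun g hg => ?_
  simp only [Finset.mem_erase] at hg
  exact hFH g hg.2.1 hg.1

/-- Comparison of uniform averages over nearby intervals. -/
lemma cmp_intervals (h : ℝ → ENNReal) (hm : Measurable h) (h1 : ∀ v, h v ≤ 1)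
    (ε d zx zy : ℝ) (hε : 0 < ε) (hd : |d| + |zx - d - zy| ≤ ε) :
    ∫⁻ l, h (zx * l - d) ∂I01 ≤
      ∫⁻ l, h (zy * l) ∂I01 + ∫⁻ l, (if l * zy < 3 * ε then 1 else 0) ∂I01 := by
  rcases lt_or_ge zy (3 * ε) with hz | hz
  · have e1 : ∫⁻ l, (if l * zy < 3 * ε then (1 : ENNReal) else 0) ∂I01 = 1 := by
      have : ∫⁻ l, (if l * zy < 3 * ε then (1 : ENNReal) else 0) ∂I01 = ∫⁻ l, 1 ∂I01 := by
        refine setLIntegral_congr_fun measurableSet_Icc fun l hl => ?_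
        have : l * zy < 3 * ε := by
          rcases le_or_gt zy 0 with h0 | h0
          · nlinarith [hl.1]
          · nlinarith [hl.2]
        simp [this]
      rw [this]; simp
    rw [e1]
    refine le_trans ?_ le_add_self
    calc ∫⁻ l, h (zx * l - d) ∂I01 ≤ ∫⁻ l, 1 ∂I01 := lintegral_mono fun l => h1 _
      _ = 1 := by simp
  · have hzy : 0 < zy := by linarith
    have hd1 := abs_nonneg d
    have hd2 := abs_nonneg (zx - d - zy)
    have hzx' : |zx - zy| ≤ ε := by
      have : zx - zy = d + (zx - d - zy) := by ring
      rw [this]; exact (abs_add_le _ _).trans hd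
    have hzx : 2 * zy / 3 ≤ zx := by
      have := (abs_le.1 hzx').1
      linarith
    have hzx0 : 0 < zx := by linarith
    set k : ℝ → ℝ := fun v => (h v).toReal with hk
    have hkm : Measurable k := hm.ennreal_toReal
    have hk0 : ∀ v, 0 ≤ k v := fun v => ENNReal.toReal_nonneg
    have hk1 : ∀ v, k v ≤ 1 := fun v => by
      have := ENNReal.toReal_mono ENNReal.one_ne_top (h1 v)
      simpa using this
    have hkn : ∀ v, ‖k v‖ ≤ 1 := fun v => by
      rw [Real.norm_eq_abs, abs_of_nonneg (hk0 v)]; exact hk1 v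
    have hinteg : ∀ a b : ℝ, IntervalIntegrable k volume a b := fun a b => by
      rw [intervalIntegrable_iff]
      refine Measure.integrableOn_of_bounded (M := 1) ?_ hkm.aestronglyMeasurable ?_
      · simp
      · exact Filter.Eventually.of_forall hkn
    have conv : ∀ f : ℝ → ℝ, Measurable f → ∫⁻ l, h (f l) ∂I01
        = ENNReal.ofReal (∫ l in (0:ℝ)..1, k (f l)) := by
      intro f hf
      rw [intervalIntegral.integral_of_le zero_le_one, ← integral_Icc_eq_integral_Ioc,
        ofReal_integral_eq_lintegral_ofReal]
      · refine lintegral_congr fun l => ?_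
        simp only [hk]
        rw [ENNReal.ofReal_toReal]
        exact ne_top_of_le_ne_top ENNReal.one_ne_top (h1 _)
      · refine Measure.integrableOn_of_bounded (M := 1) ?_ (hkm.comp hf).aestronglyMeasurable ?_
        · simp
        · exact Filter.Eventually.of_forall fun l => hkn _
      · exact Filter.Eventually.of_forall fun l => hk0 _
    have e1 : ENNReal.ofReal (3 * ε / zy) ≤
        ∫⁻ l, (if l * zy < 3 * ε then (1 : ENNReal) else 0) ∂I01 := by
      have h3 : 3 * ε / zy ≤ 1 := by rw [div_le_one hzy]; exact hz
      calc ENNReal.ofReal (3 * ε / zy) = volume (Set.Ico 0 (3 * ε / zy)) := by simp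
        _ = ∫⁻ l in Set.Ico 0 (3 * ε / zy), 1 := by simp
        _ ≤ ∫⁻ l in Set.Ico 0 (3 * ε / zy), (if l * zy < 3 * ε then (1 : ENNReal) else 0) := by
            refine setLIntegral_mono' measurableSet_Ico fun l hl => ?_
            have : l * zy < 3 * ε := by
              have := hl.2
              rwa [lt_div_iff₀ hzy] at this
            simp [this]
        _ ≤ _ := by
            refine lintegral_mono_set ?_
            intro l hl
            exact ⟨hl.1, hl.2.le.trans h3⟩
    refine le_trans ?_ (add_le_add_right e1 _)
    rw [conv (fun l => zx * l - d) (by fun_prop), conv (fun l => zy * l) (by fun_prop),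
      ← ENNReal.ofReal_add (intervalIntegral.integral_nonneg zero_le_one fun l _ => hk0 _)
        (by positivity)]
    refine ENNReal.ofReal_le_ofReal ?_
    rw [intervalIntegral.integral_comp_mul_sub _ hzx0.ne',
      intervalIntegral.integral_comp_mul_left _ hzy.ne']
    simp only [mul_zero, mul_one, zero_sub, smul_eq_mul]
    have s1 : ∫ v in (-d)..(zx - d), k v = (∫ v in (-d)..0, k v) + (∫ v in (0:ℝ)..zy, k v)
        + ∫ v in zy..(zx - d), k v := by
      rw [intervalIntegral.integral_add_adjacent_intervals (hinteg _ _) (hinteg _ _),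
        intervalIntegral.integral_add_adjacent_intervals (hinteg _ _) (hinteg _ _)]
    have b1 : (∫ v in (-d)..0, k v) ≤ |d| := by
      have := intervalIntegral.norm_integral_le_of_norm_le_const (a := -d) (b := 0) (f := k)
        (C := 1) (fun v _ => hkn v)
      simp only [zero_sub, neg_neg, one_mul] at this
      exact (le_abs_self _).trans this
    have b2 : (∫ v in zy..(zx - d), k v) ≤ |zx - d - zy| := by
      have := intervalIntegral.norm_integral_le_of_norm_le_const (a := zy) (b := zx - d) (f := k)
        (C := 1) (fun v _ => hkn v)
      simp only [one_mul] at this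
      exact (le_abs_self _).trans this
    have b3 : (∫ v in (0:ℝ)..zy, k v) ≤ zy := by
      have := intervalIntegral.norm_integral_le_of_norm_le_const (a := 0) (b := zy) (f := k)
        (C := 1) (fun v _ => hkn v)
      simp only [one_mul, sub_zero, abs_of_pos hzy] at this
      exact (le_abs_self _).trans this
    have b4 : 0 ≤ (∫ v in (0:ℝ)..zy, k v) := intervalIntegral.integral_nonneg hzy.le fun v _ => hk0 v
    rw [s1]
    set J := ∫ v in (0:ℝ)..zy, k v
    set J1 := ∫ v in (-d)..0, k v
    set J2 := ∫ v in zy..(zx - d), k v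
    have hJ : J / zy ≤ 1 := by rw [div_le_one hzy]; exact b3
    have hJ0 : 0 ≤ J / zy := by positivity
    have key : J1 + J + J2 ≤ zx * (zy⁻¹ * J + 3 * ε / zy) := by
      have e2 : J = zy * (J / zy) := by field_simp
      have e3 : zy⁻¹ * J = J / zy := by ring
      have e4 : 2 * ε ≤ zx * (3 * ε / zy) := by
        have : 2 * zy / 3 * (3 * ε / zy) = 2 * ε := by field_simp
        rw [← this]
        exact mul_le_mul_of_nonneg_right hzx (by positivity)
      have e5 : (zy - zx) * (J / zy) ≤ ε := by
        have := (abs_le.1 hzx').1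
        nlinarith
      rw [e3]
      nlinarith
    calc zx⁻¹ * (J1 + J + J2) ≤ zx⁻¹ * (zx * (zy⁻¹ * J + 3 * ε / zy)) :=
          mul_le_mul_of_nonneg_left key (by positivity)
      _ = _ := by field_simp

end PhaseTwo

section Coupling

variable {α : Type*} [Fintype α] [DecidableEq α]

/-- The block with label `c`. -/
def blk (L : List (α × α)) (c : α) : Finset α := Finset.univ.filter fun g => lab L g = c

lemma mem_blk (L : List (α × α)) (c g : α) : g ∈ blk L c ↔ lab L g = c := by simp [blk]

/-- The matching hypothesis of the coupling. -/
def Close (ε : ℝ) (L : List (α × α)) (x y : α → ℝ) : Prop :=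
  ∀ c, ∑ g ∈ blk L c, (x g - y g) = 0 ∧ ∑ g ∈ blk L c, |x g - y g| ≤ ε

lemma close_cons_same (ε : ℝ) (p q : α) (L : List (α × α)) (x y : α → ℝ) (hpq : p ≠ q)
    (hs : lab L p = lab L q) (h : Close ε ((p, q) :: L) x y) (l : ℝ) (hl : l ∈ Set.Icc (0:ℝ) 1) :
    Close ε L (st p q l x) (st p q l y) := by
  have hlab : lab ((p, q) :: L) = lab L := by
    funext g
    simp only [lab]
    split_ifs with h1
    · rw [h1, hs]
    · rfl
  have hb : ∀ c, blk ((p, q) :: L) c = blk L c := by intro c; simp only [blk, hlab]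
  intro c
  have hc := h c
  rw [hb, sum_split _ p q hpq, sum_split (blk L c) p q hpq (fun g => |x g - y g|)] at hc
  rw [sum_split _ p q hpq, sum_split (blk L c) p q hpq (fun g => |st p q l x g - st p q l y g|),
    sum_erase_stv (blk L c) p q (fun g => st p q l x g - st p q l y g) (fun g => x g - y g)
      (fun g h1 h2 => by simp [st, h1, h2]),
    sum_erase_stv (blk L c) p q (fun g => |st p q l x g - st p q l y g|) (fun g => |x g - y g|)
      (fun g h1 h2 => by simp [st, h1, h2])]
  simp only [mem_blk, ← hs] at hc ⊢
  split_ifs at hc ⊢ with h1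
  · have e1 : st p q l x p - st p q l y p = l * ((x p - y p) + (x q - y q)) := by
      simp [st]; ring
    have e2 : st p q l x q - st p q l y q = (1 - l) * ((x p - y p) + (x q - y q)) := by
      simp [st, hpq.symm]; ring
    rw [e1, e2]
    constructor
    · rw [← hc.1]; ring
    · rw [abs_mul, abs_mul, abs_of_nonneg hl.1, abs_of_nonneg (sub_nonneg.2 hl.2)]
      have := abs_add_le (x p - y p) (x q - y q)
      have := hc.2
      linarith
  · exact hc

lemma abs_sum_le' {α : Type*} (S : Finset α) (F : α → ℝ) : |∑ g ∈ S, F g| ≤ ∑ g ∈ S, |F g| :=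
  Finset.abs_sum_le_sum_abs _ _

lemma close_cons_diff (ε : ℝ) (p q : α) (L : List (α × α)) (x y : α → ℝ)
    (hs : lab L p ≠ lab L q) (h : Close ε ((p, q) :: L) x y) :
    ∃ d : ℝ, |d| + |(x p + x q) - d - (y p + y q)| ≤ ε ∧
      ∀ v, Close ε L (stv p q (v + d) x) (stv p q v y) := by
  have hpq : p ≠ q := fun h => hs (by rw [h])
  have hU : blk ((p, q) :: L) (lab L p) = blk L (lab L p) ∪ blk L (lab L q) := by
    ext g
    simp only [mem_blk, Finset.mem_union, lab]
    split_ifs with h1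
    · simp [h1]
    · simp [h1]
  have hdisj : Disjoint (blk L (lab L p)) (blk L (lab L q)) := by
    rw [Finset.disjoint_left]
    intro g h1 h2
    rw [mem_blk] at h1 h2
    exact hs (h1.symm.trans h2)
  have hp : p ∈ blk L (lab L p) := by simp [mem_blk]
  have hq : q ∈ blk L (lab L q) := by simp [mem_blk]
  have hp' : p ∉ blk L (lab L q) := by simpa [mem_blk] using hs
  have hq' : q ∉ blk L (lab L p) := by simpa [mem_blk] using hs.symm
  have h0 := h (lab L p)
  rw [hU, Finset.sum_union hdisj, Finset.sum_union hdisj] at h0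
  rw [sum_split (blk L (lab L p)) p q hpq, sum_split (blk L (lab L q)) p q hpq,
    sum_split (blk L (lab L p)) p q hpq (fun g => |x g - y g|),
    sum_split (blk L (lab L q)) p q hpq (fun g => |x g - y g|)] at h0
  simp only [hp, hq, hp', hq', if_true, if_false, add_zero] at h0
  set S1 := ((blk L (lab L p)).erase p).erase q with hS1
  set S2 := ((blk L (lab L q)).erase p).erase q with hS2
  have a1 := abs_sum_le' S1 (fun g => x g - y g)
  have a2 := abs_sum_le' S2 (fun g => x g - y g)
  set R1 := ∑ g ∈ S1, (x g - y g) with hR1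
  set R2 := ∑ g ∈ S2, (x g - y g) with hR2
  set A1 := ∑ g ∈ S1, |x g - y g| with hA1
  set A2 := ∑ g ∈ S2, |x g - y g| with hA2
  obtain ⟨h0a, h0b⟩ := h0
  have p0 := abs_nonneg (x p - y p)
  have q0 := abs_nonneg (x q - y q)
  have hE : (x p + x q) - (-R1) - (y p + y q) = -R2 := by linarith
  refine ⟨-R1, ?_, ?_⟩
  · rw [hE, abs_neg, abs_neg]; linarith
  intro v c
  rw [sum_split _ p q hpq, sum_split (blk L c) p q hpq
      (fun g => |stv p q (v + -R1) x g - stv p q v y g|),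
    sum_erase_stv (blk L c) p q (fun g => stv p q (v + -R1) x g - stv p q v y g)
      (fun g => x g - y g) (fun g h1 h2 => by simp [stv, h1, h2]),
    sum_erase_stv (blk L c) p q (fun g => |stv p q (v + -R1) x g - stv p q v y g|)
      (fun g => |x g - y g|) (fun g h1 h2 => by simp [stv, h1, h2])]
  have e1 : stv p q (v + -R1) x p - stv p q v y p = -R1 := by
    simp [stv]
  have e2 : stv p q (v + -R1) x q - stv p q v y q = -R2 := by
    simp only [stv, hpq.symm, if_true, if_false]; linarith
  rw [e1, e2, abs_neg, abs_neg]
  by_cases c1 : lab L p = c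
  · subst c1
    simp only [hp, hq', if_true, if_false, ← hS1]
    rw [← hR1, ← hA1]
    refine ⟨by ring, ?_⟩
    have : |R1| ≤ |x p - y p| + |R2| + |x q - y q| := by
      have : R1 = -((x p - y p) + R2 + (x q - y q)) := by linarith
      rw [this, abs_neg]
      exact (abs_add_le _ _).trans (add_le_add_left (abs_add_le _ _) _)
    linarith
  · by_cases c2 : lab L q = c
    · subst c2
      simp only [hp', hq, if_true, if_false, ← hS2]
      rw [← hR2, ← hA2]
      refine ⟨by ring, ?_⟩
      have : |R2| ≤ |x p - y p| + |R1| + |x q - y q| := by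
        have : R2 = -((x p - y p) + R1 + (x q - y q)) := by linarith
        rw [this, abs_neg]
        exact (abs_add_le _ _).trans (add_le_add_left (abs_add_le _ _) _)
      linarith
    · have hb : blk ((p, q) :: L) c = blk L c := by
        ext g
        simp only [mem_blk, lab]
        split_ifs with h1
        · rw [h1]; simp [c1, c2]
        · rfl
      have hc := h c
      rw [hb, sum_split _ p q hpq, sum_split (blk L c) p q hpq (fun g => |x g - y g|)] at hc
      simpa [mem_blk, c1, c2] using hc

/-- The non-Markovian coupling estimate for a fixed list of edges. -/
theorem coupling_ev (ε : ℝ) (hε : 0 < ε) (φ : (α → ℝ) → ENNReal) (hφ : Measurable φ)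
    (hφ1 : ∀ x, φ x ≤ 1) (L : List (α × α)) (hL : ∀ e ∈ L, e.1 ≠ e.2) (x y : α → ℝ)
    (h : Close ε L x y) : ev L φ x ≤ ev L φ y + err ε L y := by
  induction L generalizing x y with
  | nil =>
    have : x = y := by
      funext g
      have := (h g).1
      have hb : blk ([] : List (α × α)) g = {g} := by
        ext k; simp [mem_blk, lab]
      rw [hb] at this
      simpa [sub_eq_zero] using this
    simp [this, ev, err]
  | cons e L ih =>
    obtain ⟨p, q⟩ := e
    have hpq : p ≠ q := hL (p, q) (by simp)
    have ih' := ih (fun e he => hL e (by simp [he]))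
    by_cases hs : lab L p = lab L q
    · have e1 : err ε ((p, q) :: L) y = ∫⁻ l, err ε L (st p q l y) ∂I01 := by
        simp [err, hs]
      rw [e1]
      simp only [ev]
      rw [← lintegral_add_left]
      · refine setLIntegral_mono' measurableSet_Icc fun l hl => ?_
        exact ih' _ _ (close_cons_same ε p q L x y hpq hs h l hl)
      · exact (measurable_ev L φ hφ).comp ((measurable_st p q).comp measurable_prodMk_left)
    · obtain ⟨d, hd, hcl⟩ := close_cons_diff ε p q L x y hs h
      have mst : Measurable fun l => st p q l y := (measurable_st p q).comp measurable_prodMk_left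
      have e1 : err ε ((p, q) :: L) y = ∫⁻ l, (if l * (y p + y q) < 3 * ε then 1 else 0) ∂I01
          + ∫⁻ l, err ε L (st p q l y) ∂I01 := by
        simp only [err, hs, if_false]
        rw [← lintegral_add_right]
        · refine lintegral_congr fun l => ?_
          simp [st]
        · exact (measurable_err ε L).comp mst
      rw [e1]
      have := cmp_intervals (fun v => ev L φ (stv p q (v + d) x))
        ((measurable_ev L φ hφ).comp ((measurable_stv p q).comp
          (measurable_prodMk_left.comp (measurable_id.add_const d))))
        (fun v => ev_le_one L φ hφ1 _) ε d (x p + x q) (y p + y q) hε hd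
      have e2 : ev ((p, q) :: L) φ x = ∫⁻ l, ev L φ (stv p q ((x p + x q) * l - d + d) x) ∂I01 := by
        simp only [ev, st_eq_stv, sub_add_cancel]
      rw [e2]
      refine this.trans ?_
      have e3 : ∫⁻ l, ev L φ (stv p q ((y p + y q) * l + d) x) ∂I01 ≤
          ev ((p, q) :: L) φ y + ∫⁻ l, err ε L (st p q l y) ∂I01 := by
        simp only [ev]
        have me : Measurable fun l => err ε L (st p q l y) := (measurable_err ε L).comp mst
        rw [← lintegral_add_right _ me]
        refine lintegral_mono fun l => ?_
        rw [st_eq_stv]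
        exact ih' _ _ (hcl _)
      refine (add_le_add_left e3 _).trans (le_of_eq ?_)
      rw [add_assoc, add_comm (∫⁻ l, err ε L (st p q l y) ∂I01)]

end Coupling

section Components

variable {α : Type*} [Fintype α] [DecidableEq α]

/-- Number of components. -/
def ncl (L : List (α × α)) : ℕ := (Finset.univ.image (lab L)).card

/-- The edges of the list connect everything. -/
def Conn (L : List (α × α)) : Prop := ∀ g h, lab L g = lab L h

lemma close_of_conn (ε : ℝ) (hε : 0 < ε) (L : List (α × α)) (hL : Conn L) (x y : α → ℝ)
    (h1 : ∑ g, x g = ∑ g, y g) (h2 : ∑ g, |x g - y g| ≤ ε) : Close ε L x y := by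
  intro c
  by_cases hc : ∃ g, lab L g = c
  · obtain ⟨g, hg⟩ := hc
    have : blk L c = Finset.univ := by
      ext k; simp [mem_blk, ← hg, hL k g]
    rw [this]
    refine ⟨?_, h2⟩
    rw [Finset.sum_sub_distrib, h1, sub_self]
  · have : blk L c = ∅ := by
      ext k
      simp only [mem_blk, Finset.notMem_empty, iff_false]
      exact fun h => hc ⟨k, h⟩
    rw [this]
    simp [hε.le]

lemma ncl_cons_diff (p q : α) (L : List (α × α)) (hs : lab L p ≠ lab L q) :
    ncl ((p, q) :: L) + 1 ≤ ncl L := by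
  have hsub : Finset.univ.image (lab ((p, q) :: L)) ⊂ Finset.univ.image (lab L) := by
    rw [Finset.ssubset_iff_of_subset]
    · refine ⟨lab L q, by simp, ?_⟩
      simp only [Finset.mem_image, Finset.mem_univ, true_and, not_exists, lab]
      intro g
      split_ifs with h
      · exact hs
      · exact h
    · intro c
      simp only [Finset.mem_image, Finset.mem_univ, true_and, lab]
      rintro ⟨g, hg⟩
      split_ifs at hg with h
      · exact ⟨p, hg⟩
      · exact ⟨g, hg⟩
  exact Finset.card_lt_card hsub

lemma ncl_cons_same (p q : α) (L : List (α × α)) (hs : lab L p = lab L q) :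
    ncl ((p, q) :: L) = ncl L := by
  have hlab : lab ((p, q) :: L) = lab L := by
    funext g
    simp only [lab]
    split_ifs with h1
    · rw [h1, hs]
    · rfl
  simp only [ncl, hlab]

lemma lintegral_err_le (U : Measure (α → ℝ))
    (hU : ∀ p q : α, p ≠ q → ∀ f : (α → ℝ) → ENNReal, Measurable f →
      ∫⁻ y, ∫⁻ l, f (st p q l y) ∂I01 ∂U = ∫⁻ y, f y ∂U)
    (ε : ℝ) (p0 : ENNReal) (hp : ∀ g, U {y | y g < 3 * ε} ≤ p0)
    (L : List (α × α)) (hL : ∀ e ∈ L, e.1 ≠ e.2) :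
    ∫⁻ y, err ε L y ∂U + ncl L * p0 ≤ Fintype.card α * p0 := by
  induction L with
  | nil =>
    have : ncl ([] : List (α × α)) = Fintype.card α := by
      have h : lab ([] : List (α × α)) = id := by funext g; rfl
      simp only [ncl]
      rw [h, Finset.image_id, Finset.card_univ]
    simp [err, this]
  | cons e L ih =>
    obtain ⟨p, q⟩ := e
    have hpq : p ≠ q := hL (p, q) (by simp)
    have ih' := ih (fun e he => hL e (by simp [he]))
    have e1 : ∫⁻ y, err ε ((p, q) :: L) y ∂U = ∫⁻ y, (if lab L p = lab L q then 0 else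
        if y p < 3 * ε then 1 else 0) ∂U + ∫⁻ y, err ε L y ∂U := by
      rw [← lintegral_add_left (measurable_bad (p, q) L ε)]
      exact hU p q hpq (fun y => (if lab L p = lab L q then 0 else
        if y p < 3 * ε then 1 else 0) + err ε L y) ((measurable_bad (p, q) L ε).add
          (measurable_err ε L))
    rw [e1]
    by_cases hs : lab L p = lab L q
    · rw [ncl_cons_same p q L hs]
      simpa [hs] using ih'
    · simp only [hs, if_false]
      have hm : MeasurableSet {y : α → ℝ | y p < 3 * ε} :=
        measurableSet_lt (measurable_pi_apply _) measurable_const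
      have e2 : ∫⁻ y, (if y p < 3 * ε then (1 : ENNReal) else 0) ∂U ≤ p0 := by
        refine le_trans (le_of_eq ?_) (hp p)
        rw [← lintegral_indicator_one hm]
        refine lintegral_congr fun y => ?_
        simp [Set.indicator_apply]
      have h3 : ((ncl ((p, q) :: L) : ℕ) : ENNReal) + 1 ≤ ncl L := by
        exact_mod_cast ncl_cons_diff p q L hs
      calc _ ≤ p0 + ∫⁻ y, err ε L y ∂U + ncl ((p, q) :: L) * p0 := by gcongr
        _ = ∫⁻ y, err ε L y ∂U + (ncl ((p, q) :: L) + 1) * p0 := by ring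
        _ ≤ ∫⁻ y, err ε L y ∂U + ncl L * p0 := by gcongr
        _ ≤ _ := ih'

/-- The averaging process. -/
def Wav : List (α × α) → (α → ℝ) → (α → ℝ)
  | [], v => v
  | e :: L, v => Wav L (st e.1 e.2 (1 / 2) v)

lemma sum_st (S : Finset α) (p q : α) (hpq : p ≠ q) (hS : p ∈ S ↔ q ∈ S) (l : ℝ) (v : α → ℝ) :
    ∑ g ∈ S, st p q l v g = ∑ g ∈ S, v g := by
  rw [sum_split _ p q hpq, sum_split S p q hpq v,
    sum_erase_stv S p q (st p q l v) v (fun g h1 h2 => by simp [st, h1, h2])]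
  by_cases h : p ∈ S
  · have h' := hS.1 h
    simp only [h, h', if_true]
    simp [st, hpq.symm]
    ring
  · have h' : q ∉ S := fun hh => h (hS.2 hh)
    simp [h, h']

lemma sum_Wav (S : Finset α) (L : List (α × α)) (hL : ∀ e ∈ L, e.1 ≠ e.2)
    (hS : ∀ e ∈ L, (e.1 ∈ S ↔ e.2 ∈ S)) (v : α → ℝ) :
    ∑ g ∈ S, Wav L v g = ∑ g ∈ S, v g := by
  induction L generalizing v with
  | nil => rfl
  | cons e L ih =>
    simp only [Wav]
    rw [ih (fun e he => hL e (by simp [he])) (fun e he => hS e (by simp [he]))]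
    exact sum_st S e.1 e.2 (hL e (by simp)) (hS e (by simp)) _ _

lemma lab_of_mem (L : List (α × α)) (e : α × α) (he : e ∈ L) : lab L e.1 = lab L e.2 := by
  induction L with
  | nil => simp at he
  | cons f L ih =>
    simp only [lab]
    rcases List.mem_cons.1 he with h | h
    · subst h
      split_ifs with h1 h2
      · rfl
      · exact absurd rfl h2
      · rfl
      · exact absurd rfl (by assumption)
    · rw [ih h]

lemma Wav_lower (o : α) (L : List (α × α)) (hL : ∀ e ∈ L, e.1 ≠ e.2) (hc : ¬ Conn L) :
    1 / (Fintype.card α : ℝ) ^ 2 ≤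
      ∑ g, (Wav L (fun g => (if g = o then 1 else 0) - 1 / (Fintype.card α : ℝ)) g) ^ 2 := by
  set S : Finset α := Finset.univ.filter fun g => lab L g ≠ lab L o with hSdef
  have hne : S.Nonempty := by
    by_contra h
    rw [Finset.not_nonempty_iff_eq_empty] at h
    apply hc
    have : ∀ g, lab L g = lab L o := by
      intro g
      by_contra hg
      have : g ∈ S := by simp [hSdef, hg]
      rw [h] at this
      simp at this
    intro g h
    rw [this g, this h]
  have hcard : (1 : ℝ) ≤ S.card := by exact_mod_cast hne.card_pos
  have hn : (0 : ℝ) < Fintype.card α := by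
    have : 0 < Fintype.card α := Fintype.card_pos_iff.2 ⟨o⟩
    exact_mod_cast this
  have hs := sum_Wav S L hL (fun e he => by simp [hSdef, lab_of_mem L e he])
    (fun g => (if g = o then 1 else 0) - 1 / (Fintype.card α : ℝ))
  have hv : ∑ g ∈ S, ((if g = o then (1 : ℝ) else 0) - 1 / (Fintype.card α : ℝ))
      = - (S.card / (Fintype.card α : ℝ)) := by
    rw [Finset.sum_congr rfl (g := fun _ => - (1 / (Fintype.card α : ℝ)))]
    · simp; ring
    · intro g hg
      have : g ≠ o := by
        rintro rfl
        simp [hSdef] at hg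
      simp [this]
  rw [hv] at hs
  set w := Wav L (fun g => (if g = o then 1 else 0) - 1 / (Fintype.card α : ℝ))
  have cs : (∑ g ∈ S, w g) ^ 2 ≤ S.card * ∑ g ∈ S, (w g) ^ 2 := sq_sum_le_card_mul_sum_sq
  rw [hs] at cs
  have hle : ∑ g ∈ S, (w g) ^ 2 ≤ ∑ g, (w g) ^ 2 :=
    Finset.sum_le_sum_of_subset_of_nonneg (Finset.subset_univ _) fun g _ _ => sq_nonneg _
  refine le_trans ?_ hle
  have h4 : (S.card : ℝ) * (S.card / (Fintype.card α : ℝ) ^ 2) ≤ S.card * ∑ g ∈ S, (w g) ^ 2 := by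
    refine le_trans (le_of_eq ?_) cs
    ring
  have h5 := le_of_mul_le_mul_left h4 (by linarith)
  refine le_trans ?_ h5
  gcongr

end Components

section Simplex

variable {α : Type*} [Fintype α] [DecidableEq α]

/-- Graph parametrization of the hyperplane `∑ x = 1`, omitting the coordinate `z`. -/
def Fz (z : α) (y : {g : α // g ≠ z} → ℝ) : α → ℝ := fun g =>
  if h : g = z then 1 - ∑ i, y i else y ⟨g, h⟩

/-- The corner simplex. -/
def cornerZ (z : α) : Set ({g : α // g ≠ z} → ℝ) := {y | (∀ i, 0 ≤ y i) ∧ ∑ i, y i ≤ 1}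

lemma Fz_self (z : α) (y : {g : α // g ≠ z} → ℝ) : Fz z y z = 1 - ∑ i, y i := by simp [Fz]

lemma Fz_ne (z : α) (y : {g : α // g ≠ z} → ℝ) (g : α) (h : g ≠ z) : Fz z y g = y ⟨g, h⟩ := by
  simp [Fz, h]

lemma Fz_continuous (z : α) : Continuous (Fz z) := by
  refine continuous_pi fun g => ?_
  simp only [Fz]
  split_ifs
  · fun_prop
  · fun_prop

lemma Fz_injective (z : α) : Function.Injective (Fz z) := by
  intro y y' h
  funext i
  have := congrFun h i.1
  rwa [Fz_ne z y i.1 i.2, Fz_ne z y' i.1 i.2] at this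

lemma Fz_lipschitz (z : α) : LipschitzWith ((Fintype.card {g : α // g ≠ z} : NNReal) + 1) (Fz z) := by
  refine LipschitzWith.of_dist_le_mul fun y y' => ?_
  rw [dist_pi_le_iff (by positivity)]
  intro g
  have hd : ∀ i, |y i - y' i| ≤ dist y y' := fun i => by
    rw [← Real.dist_eq]; exact dist_le_pi_dist y y' i
  push_cast
  by_cases h : g = z
  · subst h
    rw [Fz_self, Fz_self, Real.dist_eq]
    have e1 : (1 - ∑ i, y i) - (1 - ∑ i, y' i) = - ∑ i, (y i - y' i) := by
      rw [Finset.sum_sub_distrib]; ring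
    rw [e1, abs_neg]
    calc |∑ i, (y i - y' i)| ≤ ∑ i, |y i - y' i| := abs_sum_le' _ _
      _ ≤ ∑ i : {k : α // k ≠ g}, dist y y' := Finset.sum_le_sum fun i _ => hd i
      _ = Fintype.card {k : α // k ≠ g} * dist y y' := by simp
      _ ≤ _ := by
        have := dist_nonneg (x := y) (y := y')
        nlinarith
  · rw [Fz_ne z y g h, Fz_ne z y' g h, Real.dist_eq]
    refine (hd _).trans ?_
    have := dist_nonneg (x := y) (y := y')
    have : (0 : ℝ) ≤ Fintype.card {g : α // g ≠ z} := by positivity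
    nlinarith

lemma card_ne_real (z : α) : (Fintype.card {g : α // g ≠ z} : ℝ) = (Fintype.card α : ℝ) - 1 := by
  have h : Fintype.card {g : α // g ≠ z} = Fintype.card α - 1 := by
    have := Fintype.card_subtype_compl (fun g : α => g = z)
    simpa using this
  have h1 : 1 ≤ Fintype.card α := Fintype.card_pos_iff.2 ⟨z⟩
  rw [h, Nat.cast_sub h1]; simp

lemma sum_split_z (z : α) (x : α → ℝ) : ∑ g, x g = x z + ∑ i : {g : α // g ≠ z}, x i := by
  rw [Fintype.sum_eq_add_sum_subtype_ne x z]

lemma Fz_image (z : α) : Fz z '' cornerZ z = simplexG α := by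
  ext x
  constructor
  · rintro ⟨y, hy, rfl⟩
    refine ⟨fun g => ?_, ?_⟩
    · by_cases h : g = z
      · subst h; rw [Fz_self]; linarith [hy.2]
      · rw [Fz_ne z y g h]; exact hy.1 _
    · rw [sum_split_z z, Fz_self]
      have : ∑ i : {g : α // g ≠ z}, Fz z y i = ∑ i, y i :=
        Finset.sum_congr rfl fun i _ => Fz_ne z y i.1 i.2
      rw [this]; ring
  · rintro ⟨h0, h1⟩
    rw [sum_split_z z] at h1
    refine ⟨fun i => x i, ⟨fun i => h0 _, by linarith [h0 z]⟩, ?_⟩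
    funext g
    by_cases h : g = z
    · subst h; rw [Fz_self]; linarith
    · rw [Fz_ne z _ g h]

lemma cornerZ_closed (z : α) : IsClosed (cornerZ z) := by
  have : cornerZ z = (⋂ i, {y : {g : α // g ≠ z} → ℝ | 0 ≤ y i}) ∩ {y | ∑ i, y i ≤ 1} := by
    ext y; simp [cornerZ]
  rw [this]
  refine IsClosed.inter (isClosed_iInter fun i => ?_) ?_
  · exact isClosed_le continuous_const (continuous_apply i)
  · exact isClosed_le (by fun_prop) continuous_const

lemma cornerZ_compact (z : α) : IsCompact (cornerZ z) := by
  refine IsCompact.of_isClosed_subset (isCompact_univ_pi fun i => isCompact_Icc (a := (0:ℝ)) (b := 1))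
    (cornerZ_closed z) ?_
  intro y hy i _
  refine ⟨hy.1 i, le_trans ?_ hy.2⟩
  exact Finset.single_le_sum (fun j _ => hy.1 j) (Finset.mem_univ i)

lemma cornerZ_pos (z : α) : 0 < volume (cornerZ z) := by
  set N : ℝ := Fintype.card {g : α // g ≠ z} + 1 with hN
  have hN0 : 0 < N := by positivity
  have hsub : Set.univ.pi (fun _ : {g : α // g ≠ z} => Set.Ioo (0:ℝ) (1 / N)) ⊆ cornerZ z := by
    intro y hy
    refine ⟨fun i => (hy i trivial).1.le, ?_⟩
    calc ∑ i, y i ≤ ∑ i : {g : α // g ≠ z}, 1 / N := Finset.sum_le_sum fun i _ => (hy i trivial).2.le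
      _ = Fintype.card {g : α // g ≠ z} * (1 / N) := by simp
      _ ≤ 1 := by rw [mul_one_div, div_le_one hN0, hN]; linarith
  refine lt_of_lt_of_le ?_ (measure_mono hsub)
  refine IsOpen.measure_pos _ (isOpen_set_pi Set.finite_univ fun i _ => isOpen_Ioo) ?_
  refine ⟨fun _ => 1 / N / 2, fun i _ => ⟨by positivity, ?_⟩⟩
  exact half_lt_self (by positivity)

lemma hausdorff_corner (z : α) : (μH[(Fintype.card α : ℝ) - 1] : Measure ({g : α // g ≠ z} → ℝ))
    = volume := by
  rw [← card_ne_real z, hausdorffMeasure_pi_real]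

lemma dim_nonneg (z : α) : 0 ≤ (Fintype.card α : ℝ) - 1 := by
  rw [← card_ne_real z]; positivity

lemma simplex_pos (z : α) : μH[(Fintype.card α : ℝ) - 1] (simplexG α) ≠ 0 := by
  have hP : LipschitzWith 1 (fun (x : α → ℝ) (i : {g : α // g ≠ z}) => x i) := by
    refine LipschitzWith.of_dist_le_mul fun x y => ?_
    simp only [NNReal.coe_one, one_mul]
    rw [dist_pi_le_iff dist_nonneg]
    intro i
    exact dist_le_pi_dist x y i
  have h1 := hP.hausdorffMeasure_image_le (dim_nonneg z) (simplexG α)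
  have h2 : cornerZ z ⊆ (fun (x : α → ℝ) (i : {g : α // g ≠ z}) => x i) '' simplexG α := by
    intro y hy
    refine ⟨Fz z y, ?_, ?_⟩
    · rw [← Fz_image z]; exact ⟨y, hy, rfl⟩
    · funext i; exact Fz_ne z y i.1 i.2
  intro h0
  rw [h0, mul_zero, hausdorff_corner] at h1
  exact absurd (le_trans (measure_mono h2) h1) (not_le.2 (cornerZ_pos z))

lemma image_fin (z : α) (B : Set ({g : α // g ≠ z} → ℝ)) (hB : volume B < ⊤) :
    μH[(Fintype.card α : ℝ) - 1] (Fz z '' B) < ⊤ := by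
  refine lt_of_le_of_lt ((Fz_lipschitz z).hausdorffMeasure_image_le (dim_nonneg z) B) ?_
  rw [hausdorff_corner]
  refine ENNReal.mul_lt_top ?_ hB
  exact ENNReal.rpow_lt_top_of_nonneg (dim_nonneg z) ENNReal.coe_ne_top

lemma simplex_fin (z : α) : μH[(Fintype.card α : ℝ) - 1] (simplexG α) ≠ ⊤ := by
  rw [← Fz_image z]
  exact (image_fin z _ (cornerZ_compact z).measure_lt_top).ne

lemma Fz_emb (z : α) : MeasurableEmbedding (Fz z) :=
  (Fz_continuous z).measurableEmbedding (Fz_injective z)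

lemma Fz_add (z : α) (y y' : {g : α // g ≠ z} → ℝ) :
    Fz z (y + y') = (Fz z y - Fz z 0) + Fz z y' := by
  funext g
  by_cases h : g = z
  · subst h
    simp only [Pi.add_apply, Pi.sub_apply, Fz_self, Finset.sum_add_distrib, Pi.zero_apply]
    simp; ring
  · simp only [Pi.add_apply, Pi.sub_apply, Fz_ne _ _ _ h, Pi.zero_apply]; ring

lemma comap_Fz (z : α) : ∃ c : NNReal, Measure.comap (Fz z) μH[(Fintype.card α : ℝ) - 1]
    = c • (volume : Measure ({g : α // g ≠ z} → ℝ)) := by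
  set ν := Measure.comap (Fz z) μH[(Fintype.card α : ℝ) - 1] with hν
  haveI : IsFiniteMeasureOnCompacts ν := ⟨fun K hK => by
    rw [hν, (Fz_emb z).comap_apply]
    exact image_fin z K hK.measure_lt_top⟩
  haveI : ν.IsAddLeftInvariant := by
    refine ⟨fun y => ?_⟩
    ext B hB
    rw [Measure.map_apply (measurable_const_add y) hB, hν, (Fz_emb z).comap_apply,
      (Fz_emb z).comap_apply]
    have : Fz z '' ((fun x => y + x) ⁻¹' B) = (fun x => (Fz z y - Fz z 0) + x) ⁻¹' (Fz z '' B) := by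
      ext x
      constructor
      · rintro ⟨b, hb, rfl⟩
        exact ⟨y + b, hb, Fz_add z y b⟩
      · rintro ⟨b, hb, hbx⟩
        refine ⟨-y + b, by simpa using hb, ?_⟩
        have h2 := Fz_add z y (-y + b)
        rw [add_neg_cancel_left, hbx] at h2
        exact (add_left_cancel h2).symm
    rw [this, measure_preimage_add]
  exact ⟨_, Measure.isAddLeftInvariant_eq_smul ν volume⟩

lemma lintegral_simplex (z : α) : ∃ c : NNReal, ∀ f : (α → ℝ) → ENNReal,
    ∫⁻ x in simplexG α, f x ∂μH[(Fintype.card α : ℝ) - 1]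
      = c * ∫⁻ y in cornerZ z, f (Fz z y) := by
  obtain ⟨c, hc⟩ := comap_Fz z
  refine ⟨c, fun f => ?_⟩
  have h1 : (μH[(Fintype.card α : ℝ) - 1]).restrict (simplexG α)
      = Measure.map (Fz z) ((Measure.comap (Fz z) μH[(Fintype.card α : ℝ) - 1]).restrict
        (cornerZ z)) := by
    rw [(Fz_emb z).restrict_comap, (Fz_emb z).map_comap, Fz_image z,
      Measure.restrict_restrict (Fz_emb z).measurableSet_range]
    congr 1
    rw [← Fz_image z]
    exact (Set.inter_eq_right.2 (Set.image_subset_range _ _)).symm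
  rw [h1, (Fz_emb z).lintegral_map, hc, Measure.restrict_smul, lintegral_smul_measure]
  rfl

/-- Scaling of one-dimensional integrals. -/
lemma scale_Icc (g : ℝ → ENNReal) (hg : Measurable g) (s : ℝ) :
    volume (Set.Icc 0 s) * ∫⁻ l, g (l * s) ∂I01 = ∫⁻ v in Set.Icc 0 s, g v := by
  rcases le_or_gt s 0 with hs | hs
  · have : volume (Set.Icc 0 s) = 0 := by simp [hs]
    rw [this, zero_mul, Measure.restrict_eq_zero.2 this, lintegral_zero_measure]
  · have h := Real.smul_map_volume_mul_right hs.ne'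
    conv_rhs => rw [← h]
    rw [Measure.restrict_smul, lintegral_smul_measure, abs_of_pos hs,
      Measure.restrict_map (measurable_mul_const s) measurableSet_Icc,
      lintegral_map hg (measurable_mul_const s)]
    have : (fun x => x * s) ⁻¹' Set.Icc 0 s = Set.Icc 0 1 := by
      ext l
      simp only [Set.mem_preimage, Set.mem_Icc]
      constructor
      · rintro ⟨h1, h2⟩
        exact ⟨by nlinarith, by nlinarith⟩
      · rintro ⟨h1, h2⟩
        exact ⟨by nlinarith, by nlinarith⟩
    rw [this]
    simp

lemma corner_resample (z a : α) (ha : a ≠ z) (g : ({g : α // g ≠ z} → ℝ) → ENNReal)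
    (hg : Measurable g) :
    ∫⁻ y in cornerZ z, ∫⁻ l, g (Function.update y ⟨a, ha⟩
      (l * (1 - ∑ i ∈ Finset.univ.erase (⟨a, ha⟩ : {g : α // g ≠ z}), y i))) ∂I01
      = ∫⁻ y in cornerZ z, g y := by
  set i0 : {g : α // g ≠ z} := ⟨a, ha⟩
  have hmeas : MeasurableSet (cornerZ z) := (cornerZ_closed z).measurableSet
  have hupd : Measurable (fun p : ({g : α // g ≠ z} → ℝ) × ℝ => Function.update p.1 i0
      (p.2 * (1 - ∑ i ∈ Finset.univ.erase i0, p.1 i))) := by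
    refine measurable_pi_iff.2 fun j => ?_
    by_cases hj : j = i0
    · subst hj; simp only [Function.update_self]; fun_prop
    · simp only [Function.update_of_ne hj]; fun_prop
  have hm1 : Measurable (fun y : {g : α // g ≠ z} → ℝ => ∫⁻ l, g (Function.update y i0
      (l * (1 - ∑ i ∈ Finset.univ.erase i0, y i))) ∂I01) :=
    Measurable.lintegral_prod_right' (f := fun p : ({g : α // g ≠ z} → ℝ) × ℝ =>
      g (Function.update p.1 i0 (p.2 * (1 - ∑ i ∈ Finset.univ.erase i0, p.1 i)))) (hg.comp hupd)
  rw [← lintegral_indicator hmeas, ← lintegral_indicator hmeas]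
  refine lintegral_eq_of_lmarginal_eq {i0} (hm1.indicator hmeas) (hg.indicator hmeas) ?_
  rw [lmarginal_singleton, lmarginal_singleton]
  funext y
  set s := 1 - ∑ i ∈ Finset.univ.erase i0, y i with hs
  have hsum : ∀ v, ∑ i ∈ Finset.univ.erase i0, Function.update y i0 v i
      = ∑ i ∈ Finset.univ.erase i0, y i := fun v =>
    Finset.sum_congr rfl fun i hi => Function.update_of_ne (Finset.ne_of_mem_erase hi) _ _
  by_cases hy : ∀ i, i ≠ i0 → 0 ≤ y i
  · have hmem : ∀ v, Function.update y i0 v ∈ cornerZ z ↔ v ∈ Set.Icc 0 s := by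
      intro v
      simp only [cornerZ, Set.mem_setOf_eq, Set.mem_Icc]
      rw [← Finset.sum_erase_add _ _ (Finset.mem_univ i0), hsum, Function.update_self, hs]
      constructor
      · rintro ⟨h1, h2⟩
        have := h1 i0
        rw [Function.update_self] at this
        exact ⟨this, by linarith⟩
      · rintro ⟨h1, h2⟩
        refine ⟨fun i => ?_, by linarith⟩
        by_cases hi : i = i0
        · subst hi; rw [Function.update_self]; exact h1
        · rw [Function.update_of_ne hi]; exact hy i hi
    have e1 : ∀ f : ({g : α // g ≠ z} → ℝ) → ENNReal,
        ∫⁻ v, (cornerZ z).indicator f (Function.update y i0 v)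
        = ∫⁻ v in Set.Icc 0 s, f (Function.update y i0 v) := by
      intro f
      rw [← lintegral_indicator measurableSet_Icc]
      refine lintegral_congr fun v => ?_
      by_cases hv : v ∈ Set.Icc 0 s
      · rw [Set.indicator_of_mem ((hmem v).2 hv), Set.indicator_of_mem hv]
      · rw [Set.indicator_of_notMem (fun h => hv ((hmem v).1 h)), Set.indicator_of_notMem hv]
    rw [e1, e1]
    simp only [Function.update_idem, hsum]
    rw [← hs, ← scale_Icc (fun v => g (Function.update y i0 v)) (hg.comp (measurable_update y)),
      setLIntegral_const, mul_comm]
  · have hmem : ∀ v, Function.update y i0 v ∉ cornerZ z := by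
      intro v hv
      apply hy
      intro i hi
      have := hv.1 i
      rwa [Function.update_of_ne hi] at this
    simp [Set.indicator_apply, hmem]

lemma simplex_resample (a b : α) (hab : a ≠ b) (f : (α → ℝ) → ENNReal) (hf : Measurable f) :
    ∫⁻ y, ∫⁻ l, f (st a b l y) ∂I01 ∂(UG α) = ∫⁻ y, f y ∂(UG α) := by
  simp only [UG, lintegral_smul_measure]
  obtain ⟨c, hc⟩ := lintegral_simplex b
  rw [hc, hc, ← corner_resample b a hab (fun y => f (Fz b y)) (hf.comp (Fz_continuous b).measurable)]
  congr 2
  refine lintegral_congr fun y => lintegral_congr fun l => ?_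
  congr 1
  set i0 : {g : α // g ≠ b} := ⟨a, hab⟩ with hi0
  have h1 : ∀ y : {g : α // g ≠ b} → ℝ, ∑ i, y i = ∑ i ∈ Finset.univ.erase i0, y i + y i0 :=
    fun y => (Finset.sum_erase_add _ _ (Finset.mem_univ i0)).symm
  have hsum : ∀ v, ∑ i ∈ Finset.univ.erase i0, Function.update y i0 v i
      = ∑ i ∈ Finset.univ.erase i0, y i := fun v =>
    Finset.sum_congr rfl fun i hi => Function.update_of_ne (Finset.ne_of_mem_erase hi) _ _
  funext g
  simp only [st]
  rw [Fz_self, Fz_ne b y a hab, h1 y]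
  split_ifs with h2 h3
  · subst h2
    rw [Fz_ne b _ g hab, Function.update_self]; ring
  · subst h3
    rw [Fz_self, h1, hsum, Function.update_self]; ring
  · rw [Fz_ne b _ g h3, Fz_ne b _ g h3, Function.update_of_ne]
    intro h; apply h2; exact congrArg Subtype.val h

lemma UG_prob (z : α) : IsProbabilityMeasure (UG α) := ⟨by
  simp only [UG, Measure.smul_apply, Measure.restrict_apply_univ, smul_eq_mul]
  exact ENNReal.inv_mul_cancel (simplex_pos z) (simplex_fin z)⟩

lemma simplex_meas : MeasurableSet (simplexG α) := by
  rcases isEmpty_or_nonempty α with h | ⟨⟨z⟩⟩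
  · exact (Set.subsingleton_of_subsingleton).measurableSet
  · rw [← Fz_image z]
    exact (Fz_emb z).measurableSet_image.2 (cornerZ_closed z).measurableSet

lemma UG_ae : ∀ᵐ y ∂(UG α), y ∈ simplexG α := by
  have h : ∀ᵐ y ∂((μH[(Fintype.card α : ℝ) - 1]).restrict (simplexG α)), y ∈ simplexG α :=
    ae_restrict_mem simplex_meas
  exact Measure.ae_smul_measure h _

lemma UG_small (i : α) (δ : ℝ) (hδ : 0 ≤ δ) :
    UG α {y | y i < δ} ≤ ENNReal.ofReal (Fintype.card α * δ) := by
  haveI := UG_prob i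
  have hn : (1 : ℝ) ≤ Fintype.card α := by
    have : 1 ≤ Fintype.card α := Fintype.card_pos_iff.2 ⟨i⟩
    exact_mod_cast this
  rcases le_or_gt 1 δ with h1 | h1
  · refine prob_le_one.trans ?_
    rw [ENNReal.one_le_ofReal]; nlinarith
  have hms : MeasurableSet {y : α → ℝ | y i < δ} :=
    measurableSet_lt (measurable_pi_apply _) measurable_const
  have hcompl : UG α {y | y i < δ}ᶜ ≥ ENNReal.ofReal (1 - Fintype.card α * δ) := by
    have hsub : AffineMap.homothety (Pi.single i 1 : α → ℝ) (1 - δ) '' simplexG α ⊆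
        {y | y i < δ}ᶜ ∩ simplexG α := by
      rintro _ ⟨x, hx, rfl⟩
      simp only [AffineMap.homothety_apply, vsub_eq_sub, vadd_eq_add]
      refine ⟨?_, ?_, ?_⟩
      · simp only [Set.mem_compl_iff, Set.mem_setOf_eq, not_lt, Pi.add_apply, Pi.smul_apply,
          Pi.sub_apply, Pi.single_eq_same, smul_eq_mul]
        nlinarith [hx.1 i]
      · intro g
        simp only [Pi.add_apply, Pi.smul_apply, Pi.sub_apply, smul_eq_mul]
        have h2 : (0:ℝ) ≤ (Pi.single i 1 : α → ℝ) g := by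
          by_cases hg : g = i
          · subst hg; simp
          · simp [Pi.single_eq_of_ne hg]
        nlinarith [hx.1 g]
      · simp only [Pi.add_apply, Pi.smul_apply, Pi.sub_apply, smul_eq_mul, Finset.sum_add_distrib,
          ← Finset.mul_sum, Finset.sum_sub_distrib, hx.2]
        simp
    have h2 := measure_mono (μ := μH[(Fintype.card α : ℝ) - 1]) hsub
    rw [hausdorffMeasure_homothety_image (by linarith) _ (by linarith : (1 - δ) ≠ 0)] at h2
    have hpos := simplex_pos i
    have hfin := simplex_fin i
    have h3 : UG α {y | y i < δ}ᶜ = (μH[(Fintype.card α : ℝ) - 1] (simplexG α))⁻¹ *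
        μH[(Fintype.card α : ℝ) - 1] ({y | y i < δ}ᶜ ∩ simplexG α) := by
      rw [UG, Measure.smul_apply, Measure.restrict_apply hms.compl, smul_eq_mul]
    rw [h3]
    refine le_trans ?_ (mul_le_mul_right h2 _)
    rw [ENNReal.smul_def, smul_eq_mul, mul_left_comm, ENNReal.inv_mul_cancel hpos hfin, mul_one]
    rw [← ENNReal.ofReal_coe_nnreal]
    apply ENNReal.ofReal_le_ofReal
    rw [NNReal.coe_rpow, coe_nnnorm, Real.norm_of_nonneg (by linarith)]
    have h4 : (Fintype.card α : ℝ) - 1 = ((Fintype.card α - 1 : ℕ) : ℝ) := by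
      rw [Nat.cast_sub (by exact_mod_cast hn)]; simp
    rw [h4, Real.rpow_natCast]
    have h5 := one_add_mul_le_pow (a := -δ) (by linarith) (Fintype.card α - 1)
    rw [← sub_eq_add_neg, ← h4] at h5
    nlinarith
  have h6 := prob_compl_eq_one_sub (μ := UG α) hms
  have h7 : UG α {y | y i < δ} = 1 - UG α {y | y i < δ}ᶜ := by
    rw [← prob_compl_eq_one_sub hms.compl, compl_compl]
  rw [h7, tsub_le_iff_right]
  refine le_trans ?_ (add_le_add_right hcompl _)
  rw [← ENNReal.ofReal_one]
  refine le_trans ?_ (ENNReal.ofReal_add_le)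
  apply ENNReal.ofReal_le_ofReal; linarith

end Simplex

section Gap

variable {G : Type*} [Group G] [Fintype G] [DecidableEq G]

/-- Real edge weight `1/(nm)`. -/
def wR (R : Finset G) : ℝ := 1 / ((Fintype.card G : ℝ) * R.card)

lemma wR_nonneg (R : Finset G) : 0 ≤ wR R := by unfold wR; positivity

/-- Dirichlet form (unnormalized). -/
def EE (R : Finset G) (v : G → ℝ) : ℝ := ∑ g, ∑ r ∈ R, (v (g * r) - v g) ^ 2

lemma EE_nonneg (R : Finset G) (v : G → ℝ) : 0 ≤ EE R v :=
  Finset.sum_nonneg fun _ _ => Finset.sum_nonneg fun _ _ => sq_nonneg _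

lemma wR_mul (R : Finset G) (hne : R.Nonempty) :
    wR R * (R.card : ℝ) = 1 / (Fintype.card G : ℝ) := by
  have h1 : (R.card : ℝ) ≠ 0 := by
    have := hne.card_pos
    positivity
  have h2 : (Fintype.card G : ℝ) ≠ 0 := by
    have : 0 < Fintype.card G := Fintype.card_pos_iff.2 ⟨1⟩
    positivity
  unfold wR; field_simp

lemma sum_mulRight (r : G) (f : G → ℝ) : ∑ g, f (g * r) = ∑ g, f g :=
  Equiv.sum_comp (Equiv.mulRight r) f

lemma sum_mulLeft (r : G) (f : G → ℝ) : ∑ g, f (r * g) = ∑ g, f g :=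
  Equiv.sum_comp (Equiv.mulLeft r) f

lemma Khat_row (R : Finset G) (hid : (1 : G) ∉ R) (v : G → ℝ) (g : G) :
    ∑ h, KhatM G R g h * v h
      = (1 - 2 / (Fintype.card G : ℝ)) * v g + 2 * wR R * ∑ r ∈ R, v (g * r) := by
  rw [← sum_mulLeft g]
  have h1 : ∀ k, KhatM G R g (g * k) * v (g * k)
      = (if k = 1 then (1 - 2 / (Fintype.card G : ℝ)) * v g else 0)
        + (if k ∈ R then 2 * wR R * v (g * k) else 0) := by
    intro k
    unfold KhatM
    by_cases hk : k = 1
    · subst hk; simp [hid]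
    · by_cases hR : k ∈ R
      · simp [hk, hR, wR]; left; field_simp
      · simp [hk, hR]
  simp_rw [h1]
  rw [Finset.sum_add_distrib]
  simp [Finset.mul_sum]

lemma EE_expand (R : Finset G) (v : G → ℝ) :
    EE R v = 2 * R.card * ∑ g, v g ^ 2 - 2 * ∑ g, ∑ r ∈ R, v g * v (g * r) := by
  have h1 : ∑ g, ∑ r ∈ R, v (g * r) ^ 2 = R.card * ∑ g, v g ^ 2 := by
    rw [Finset.sum_comm]
    simp_rw [sum_mulRight _ (fun g => v g ^ 2)]
    simp
  have h2 : ∑ g, ∑ _r ∈ R, v g ^ 2 = R.card * ∑ g, v g ^ 2 := by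
    simp [Finset.mul_sum]
  have h3 : EE R v = ∑ g, ∑ r ∈ R, v (g * r) ^ 2 + ∑ g, ∑ _r ∈ R, v g ^ 2
      - 2 * ∑ g, ∑ r ∈ R, v g * v (g * r) := by
    unfold EE
    simp only [Finset.mul_sum, ← Finset.sum_add_distrib, ← Finset.sum_sub_distrib]
    refine Finset.sum_congr rfl fun g _ => Finset.sum_congr rfl fun r _ => by ring
  rw [h3, h1, h2]; ring

lemma Khat_quad (R : Finset G) (hid : (1 : G) ∉ R) (hne : R.Nonempty) (v : G → ℝ) :
    ∑ g, ∑ h, v g * KhatM G R g h * v h = ∑ g, v g ^ 2 - wR R * EE R v := by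
  have h1 : ∀ g, ∑ h, v g * KhatM G R g h * v h
      = (1 - 2 / (Fintype.card G : ℝ)) * v g ^ 2 + 2 * wR R * ∑ r ∈ R, v g * v (g * r) := by
    intro g
    simp_rw [mul_assoc (v g)]
    rw [← Finset.mul_sum, Khat_row R hid, ← Finset.mul_sum]; ring
  simp_rw [h1]
  rw [Finset.sum_add_distrib, ← Finset.mul_sum, ← Finset.mul_sum, EE_expand]
  have := wR_mul R hne
  have e : wR R * (2 * R.card * ∑ g, v g ^ 2 - 2 * ∑ g, ∑ r ∈ R, v g * v (g * r))
    = 2 * (wR R * R.card) * ∑ g, v g ^ 2 - 2 * wR R * ∑ g, ∑ r ∈ R, v g * v (g * r) := by ring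
  rw [e, this]; ring

lemma gap_ineq (R : Finset G) (hid : (1 : G) ∉ R) (hne : R.Nonempty) (v : G → ℝ)
    (hv : ∑ g, v g = 0) : gapHat G R * ∑ g, v g ^ 2 ≤ wR R * EE R v := by
  have hs : 0 ≤ ∑ g, v g ^ 2 := Finset.sum_nonneg fun _ _ => sq_nonneg _
  rcases hs.eq_or_lt with h0 | hpos
  · rw [← h0, mul_zero]; exact mul_nonneg (wR_nonneg R) (EE_nonneg R v)
  set s := ∑ g, v g ^ 2 with hsdef
  have hq : √s ^ 2 = s := Real.sq_sqrt hs
  have hq0 : √s ≠ 0 := (Real.sqrt_pos.2 hpos).ne'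
  have hb : BddAbove {lam : ℝ | ∃ v : G → ℝ, ∑ g, v g = 0 ∧ ∑ g, (v g) ^ 2 = 1 ∧
      lam = ∑ g, ∑ h, v g * KhatM G R g h * v h} := by
    refine ⟨1, ?_⟩
    rintro _ ⟨u, _, h2, rfl⟩
    rw [Khat_quad R hid hne, h2]
    have := mul_nonneg (wR_nonneg R) (EE_nonneg R u)
    linarith
  have hm := le_csSup hb (a := 1 - wR R * EE R (fun g => v g / √s)) (by
    refine ⟨fun g => v g / √s, ?_, ?_, ?_⟩
    · rw [← Finset.sum_div, hv, zero_div]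
    · simp_rw [div_pow]
      rw [← Finset.sum_div, hq]; exact div_self hpos.ne'
    · rw [Khat_quad R hid hne]
      congr 1
      simp_rw [div_pow]
      rw [← Finset.sum_div, hq]; exact (div_self hpos.ne').symm)
  have hE : EE R (fun g => v g / √s) = EE R v / s := by
    unfold EE
    simp_rw [Finset.sum_div]
    refine Finset.sum_congr rfl fun g _ => Finset.sum_congr rfl fun r _ => ?_
    rw [← sub_div, div_pow, hq]
  rw [hE] at hm
  have h3 : gapHat G R ≤ wR R * (EE R v / s) := by
    unfold gapHat; linarith
  calc gapHat G R * s ≤ wR R * (EE R v / s) * s := mul_le_mul_of_nonneg_right h3 hs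
    _ = wR R * EE R v := by field_simp

lemma gap_pos (R : Finset G) (hid : (1 : G) ∉ R) (hne : R.Nonempty)
    (hgen : Subgroup.closure (R : Set G) = ⊤) : 0 < gapHat G R := by
  set S : Set (G → ℝ) := {v | ∑ g, v g = 0 ∧ ∑ g, (v g) ^ 2 = 1} with hS
  have hset : {lam : ℝ | ∃ v : G → ℝ, ∑ g, v g = 0 ∧ ∑ g, (v g) ^ 2 = 1 ∧
      lam = ∑ g, ∑ h, v g * KhatM G R g h * v h}
      = (fun v : G → ℝ => ∑ g, ∑ h, v g * KhatM G R g h * v h) '' S := by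
    ext lam; constructor
    · rintro ⟨v, h1, h2, h3⟩; exact ⟨v, ⟨h1, h2⟩, h3.symm⟩
    · rintro ⟨v, ⟨h1, h2⟩, h3⟩; exact ⟨v, h1, h2, h3.symm⟩
  have hcl : IsClosed S := by
    apply IsClosed.inter
    · exact isClosed_eq (by fun_prop) continuous_const
    · exact isClosed_eq (by fun_prop) continuous_const
  have hcomp : IsCompact S := by
    refine Metric.isCompact_of_isClosed_isBounded hcl ?_
    refine (Metric.isBounded_closedBall (x := (0 : G → ℝ)) (r := 1)).subset ?_
    rintro v ⟨_, h2⟩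
    rw [mem_closedBall_zero_iff, pi_norm_le_iff_of_nonneg zero_le_one]
    intro g
    have : v g ^ 2 ≤ 1 := by
      rw [← h2]; exact Finset.single_le_sum (f := fun g => v g ^ 2) (fun _ _ => sq_nonneg _)
        (Finset.mem_univ g)
    rw [Real.norm_eq_abs]
    exact abs_le_one_iff_mul_self_le_one.2 (by nlinarith)
  unfold gapHat
  rw [hset]
  rcases S.eq_empty_or_nonempty with he | hnon
  · rw [he]; simp
  have hmem := (hcomp.image (f := fun v : G → ℝ => ∑ g, ∑ h, v g * KhatM G R g h * v h)
    (by fun_prop)).sSup_mem (hnon.image _)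
  obtain ⟨v, ⟨h1, h2⟩, h3⟩ := hmem
  rw [← h3]
  simp only
  rw [Khat_quad R hid hne, h2]
  by_contra hcon
  have hw : 0 < wR R := by
    have := hne.card_pos
    have : 0 < Fintype.card G := Fintype.card_pos_iff.2 ⟨1⟩
    unfold wR; positivity
  have hE : EE R v = 0 := by
    have := EE_nonneg R v
    by_contra hE
    have : 0 < EE R v := lt_of_le_of_ne this (Ne.symm hE)
    have := mul_pos hw this
    linarith
  have hinv : ∀ r ∈ R, ∀ g, v (g * r) = v g := by
    intro r hr g
    unfold EE at hE
    rw [Finset.sum_eq_zero_iff_of_nonneg (fun _ _ => Finset.sum_nonneg fun _ _ => sq_nonneg _)] at hE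
    have := hE g (Finset.mem_univ g)
    rw [Finset.sum_eq_zero_iff_of_nonneg (fun _ _ => sq_nonneg _)] at this
    have := this r hr
    have := pow_eq_zero_iff (two_ne_zero) |>.1 this
    linarith
  have hall : ∀ k : G, ∀ g, v (g * k) = v g := by
    intro k
    have hk : k ∈ Subgroup.closure (R : Set G) := by rw [hgen]; trivial
    induction hk using Subgroup.closure_induction with
    | mem x hx => exact hinv x hx
    | one => simp
    | mul x y _ _ hx hy => intro g; rw [← mul_assoc, hy, hx]
    | inv x _ hx => intro g; rw [← hx (g * x⁻¹)]; simp
  have hc : ∀ g, v g = v 1 := fun g => by simpa using hall g 1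
  have h0 : v 1 = 0 := by
    simp_rw [fun g => hc g] at h1
    rw [Finset.sum_const, nsmul_eq_mul] at h1
    rcases mul_eq_zero.1 h1 with h | h
    · have : 0 < Fintype.card G := Fintype.card_pos_iff.2 ⟨1⟩
      rw [Finset.card_univ] at h
      exact absurd h (by positivity)
    · exact h
  simp_rw [fun g => hc g, h0] at h2
  simp at h2

lemma EE_le (R : Finset G) (hne : R.Nonempty) (v : G → ℝ) :
    wR R * EE R v ≤ 4 / (Fintype.card G : ℝ) * ∑ g, v g ^ 2 := by
  have h1 : EE R v ≤ 4 * R.card * ∑ g, v g ^ 2 := by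
    have h1 : ∑ g, ∑ r ∈ R, v (g * r) ^ 2 = R.card * ∑ g, v g ^ 2 := by
      rw [Finset.sum_comm]
      simp_rw [sum_mulRight _ (fun g => v g ^ 2)]
      simp
    have h2 : ∑ g, ∑ _r ∈ R, v g ^ 2 = R.card * ∑ g, v g ^ 2 := by
      simp [Finset.mul_sum]
    have h3 : EE R v ≤ 2 * (∑ g, ∑ r ∈ R, v (g * r) ^ 2 + ∑ g, ∑ _r ∈ R, v g ^ 2) := by
      unfold EE
      simp only [Finset.mul_sum, ← Finset.sum_add_distrib]
      refine Finset.sum_le_sum fun g _ => Finset.sum_le_sum fun r _ => ?_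
      nlinarith [sq_nonneg (v (g * r) + v g)]
    rw [h1, h2] at h3; linarith
  calc wR R * EE R v ≤ wR R * (4 * R.card * ∑ g, v g ^ 2) :=
        mul_le_mul_of_nonneg_left h1 (wR_nonneg R)
    _ = 4 * (wR R * R.card) * ∑ g, v g ^ 2 := by ring
    _ = _ := by rw [wR_mul R hne]; ring

lemma gap_le (R : Finset G) (hid : (1 : G) ∉ R) (hne : R.Nonempty) :
    gapHat G R ≤ 4 / (Fintype.card G : ℝ) := by
  obtain ⟨r, hr⟩ := hne
  have hr1 : r ≠ 1 := fun h => hid (h ▸ hr)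
  set v : G → ℝ := fun g => (if g = 1 then 1 else 0) - (if g = r then 1 else 0) with hvdef
  have h1 := gap_ineq R hid ⟨r, hr⟩ v (by simp [hvdef])
  have h2 := EE_le R ⟨r, hr⟩ v
  have h3 : 0 < ∑ g, v g ^ 2 := by
    refine Finset.sum_pos' (fun _ _ => sq_nonneg _) ⟨1, Finset.mem_univ _, ?_⟩
    simp [hvdef, hr1.symm]
  exact le_of_mul_le_mul_right (h1.trans h2) h3

end Gap

section Ops

variable {G : Type*} [Group G] [Fintype G] [DecidableEq G]

/-- Extended edge weight. -/
def wE (R : Finset G) : ENNReal := ENNReal.ofReal (wR R)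

lemma wE_eq (R : Finset G) (hne : R.Nonempty) :
    wE R = (Fintype.card G : ENNReal)⁻¹ * (R.card : ENNReal)⁻¹ := by
  have h1 : 0 < (R.card : ℝ) := by have := hne.card_pos; positivity
  have h2 : 0 < (Fintype.card G : ℝ) := by
    have : 0 < Fintype.card G := Fintype.card_pos_iff.2 ⟨1⟩
    positivity
  unfold wE wR
  rw [one_div, mul_inv, ENNReal.ofReal_mul (by positivity), ENNReal.ofReal_inv_of_pos h2,
    ENNReal.ofReal_inv_of_pos h1, ENNReal.ofReal_natCast, ENNReal.ofReal_natCast]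

lemma wE_sum (R : Finset G) (hne : R.Nonempty) (c : ENNReal) :
    wE R * ∑ _g : G, ∑ _r ∈ R, c = c := by
  rw [wE_eq R hne]
  simp only [Finset.sum_const, nsmul_eq_mul, Finset.card_univ]
  have h1 : (R.card : ENNReal) ≠ 0 := by have := hne.card_pos; exact_mod_cast this.ne'
  have h2 : (Fintype.card G : ENNReal) ≠ 0 := by
    have : 0 < Fintype.card G := Fintype.card_pos_iff.2 ⟨1⟩
    exact_mod_cast this.ne'
  calc (Fintype.card G : ENNReal)⁻¹ * (R.card : ENNReal)⁻¹ * (Fintype.card G * (R.card * c))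
      = ((Fintype.card G : ENNReal)⁻¹ * Fintype.card G) * ((R.card : ENNReal)⁻¹ * R.card) * c := by
        ring
    _ = c := by
      rw [ENNReal.inv_mul_cancel h1 (ENNReal.natCast_ne_top _),
        ENNReal.inv_mul_cancel h2 (ENNReal.natCast_ne_top _)]; simp

/-- Transition operator of the Gibbs sampler. -/
def Kop (R : Finset G) (φ : (G → ℝ) → ENNReal) (x : G → ℝ) : ENNReal :=
  wE R * ∑ g, ∑ r ∈ R, ∫⁻ l, φ (st g (g * r) l x) ∂I01

/-- Transition operator of the synchronous coupling. -/
def K2 (R : Finset G) (Φ : (G → ℝ) × (G → ℝ) → ENNReal) (p : (G → ℝ) × (G → ℝ)) : ENNReal :=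
  wE R * ∑ g, ∑ r ∈ R, ∫⁻ l, Φ (st g (g * r) l p.1, st g (g * r) l p.2) ∂I01

/-- Average over random lists of edges. -/
def EL (R : Finset G) : ℕ → (List (G × G) → ENNReal) → ENNReal
  | 0, F => F []
  | N + 1, F => wE R * ∑ g, ∑ r ∈ R, EL R N (fun L => F ((g, g * r) :: L))

lemma measurable_Kop (R : Finset G) (φ : (G → ℝ) → ENNReal) (hφ : Measurable φ) :
    Measurable (Kop R φ) := by
  unfold Kop
  refine Measurable.const_mul ?_ _
  refine Finset.measurable_fun_sum _ fun g _ => Finset.measurable_fun_sum _ fun r _ => ?_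
  exact Measurable.lintegral_prod_right'
    (f := fun p : (G → ℝ) × ℝ => φ (st g (g * r) p.2 p.1)) (hφ.comp (measurable_st g (g * r)))

lemma measurable_Kop_iter (R : Finset G) (φ : (G → ℝ) → ENNReal) (hφ : Measurable φ) (N : ℕ) :
    Measurable ((Kop R)^[N] φ) := by
  induction N with
  | zero => exact hφ
  | succ N ih => rw [Function.iterate_succ_apply']; exact measurable_Kop R _ ih

lemma EL_congr (R : Finset G) (N : ℕ) (F F' : List (G × G) → ENNReal) (h : ∀ L, F L = F' L) :
    EL R N F = EL R N F' := by
  rw [funext h]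

lemma EL_mono (R : Finset G) (hid : (1 : G) ∉ R) (N : ℕ) (F F' : List (G × G) → ENNReal)
    (h : ∀ L, (∀ e ∈ L, e.1 ≠ e.2) → F L ≤ F' L) : EL R N F ≤ EL R N F' := by
  induction N generalizing F F' with
  | zero => exact h [] (by simp)
  | succ N ih =>
    simp only [EL]
    refine mul_le_mul_right (Finset.sum_le_sum fun g _ => Finset.sum_le_sum fun r hr => ?_) _
    refine ih _ _ fun L hL => h _ ?_
    intro e he
    rcases List.mem_cons.1 he with rfl | he
    · intro h1
      simp only [left_eq_mul] at h1
      exact hid (h1 ▸ hr)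
    · exact hL e he

lemma EL_add (R : Finset G) (N : ℕ) (F F' : List (G × G) → ENNReal) :
    EL R N (fun L => F L + F' L) = EL R N F + EL R N F' := by
  induction N generalizing F F' with
  | zero => rfl
  | succ N ih =>
    simp only [EL]
    simp_rw [ih, Finset.sum_add_distrib, mul_add]

lemma EL_const (R : Finset G) (hne : R.Nonempty) (N : ℕ) (c : ENNReal) :
    EL R N (fun _ => c) = c := by
  induction N with
  | zero => rfl
  | succ N ih =>
    simp only [EL]
    simp_rw [ih]
    exact wE_sum R hne c

lemma EL_const_mul (R : Finset G) (N : ℕ) (c : ENNReal) (F : List (G × G) → ENNReal) :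
    EL R N (fun L => c * F L) = c * EL R N F := by
  induction N generalizing F with
  | zero => rfl
  | succ N ih =>
    simp only [EL]
    simp_rw [ih, ← Finset.mul_sum]
    ring

lemma measurable_EL {β : Type*} [MeasurableSpace β] (R : Finset G) (N : ℕ)
    (f : List (G × G) → β → ENNReal) (hf : ∀ L, Measurable (f L)) :
    Measurable (fun b => EL R N (fun L => f L b)) := by
  induction N generalizing f with
  | zero => exact hf []
  | succ N ih =>
    simp only [EL]
    refine Measurable.const_mul ?_ _
    refine Finset.measurable_fun_sum _ fun g _ => Finset.measurable_fun_sum _ fun r _ => ?_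
    exact ih _ fun L => hf _

lemma EL_lintegral {β : Type*} [MeasurableSpace β] (μ : Measure β) (R : Finset G) (N : ℕ)
    (f : List (G × G) → β → ENNReal) (hf : ∀ L, Measurable (f L)) :
    ∫⁻ b, EL R N (fun L => f L b) ∂μ = EL R N (fun L => ∫⁻ b, f L b ∂μ) := by
  induction N generalizing f with
  | zero => rfl
  | succ N ih =>
    simp only [EL]
    have hm : ∀ g r, Measurable fun b => EL R N (fun L => f ((g, g * r) :: L) b) :=
      fun g r => measurable_EL R N (fun L => f ((g, g * r) :: L)) fun L => hf _
    rw [lintegral_const_mul _ (Finset.measurable_fun_sum _ fun g _ =>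
      Finset.measurable_fun_sum _ fun r _ => hm g r)]
    rw [lintegral_finsetSum _ fun g _ => Finset.measurable_fun_sum _ fun r _ => hm g r]
    congr 1
    refine Finset.sum_congr rfl fun g _ => ?_
    rw [lintegral_finsetSum _ fun r _ => hm g r]
    refine Finset.sum_congr rfl fun r _ => ?_
    exact ih (fun L => f ((g, g * r) :: L)) fun L => hf _

lemma Kop_iter_EL (R : Finset G) (φ : (G → ℝ) → ENNReal) (hφ : Measurable φ) (N : ℕ)
    (x : G → ℝ) : (Kop R)^[N] φ x = EL R N (fun L => ev L φ x) := by
  induction N generalizing x with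
  | zero => rfl
  | succ N ih =>
    rw [Function.iterate_succ_apply']
    simp only [Kop, EL]
    congr 1
    refine Finset.sum_congr rfl fun g _ => Finset.sum_congr rfl fun r _ => ?_
    simp_rw [ih]
    rw [EL_lintegral I01 R N (fun L l => ev L φ (st g (g * r) l x))]
    · rfl
    · intro L
      exact (measurable_ev L φ hφ).comp ((measurable_st g (g * r)).comp (measurable_prodMk_left))

lemma K2_iter_fst (R : Finset G) (f : (G → ℝ) → ENNReal) (N : ℕ) (p : (G → ℝ) × (G → ℝ)) :
    (K2 R)^[N] (fun p => f p.1) p = (Kop R)^[N] f p.1 := by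
  induction N generalizing p with
  | zero => rfl
  | succ N ih =>
    rw [Function.iterate_succ_apply', Function.iterate_succ_apply']
    simp only [K2, Kop, ih]

lemma K2_iter_snd (R : Finset G) (f : (G → ℝ) → ENNReal) (N : ℕ) (p : (G → ℝ) × (G → ℝ)) :
    (K2 R)^[N] (fun p => f p.2) p = (Kop R)^[N] f p.2 := by
  induction N generalizing p with
  | zero => rfl
  | succ N ih =>
    rw [Function.iterate_succ_apply', Function.iterate_succ_apply']
    simp only [K2, Kop, ih]

lemma edge_ne (R : Finset G) (hid : (1 : G) ∉ R) (g r : G) (hr : r ∈ R) : g ≠ g * r := by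
  intro h1
  simp only [left_eq_mul] at h1
  exact hid (h1 ▸ hr)

lemma K2_iter_mono (R : Finset G) (hid : (1 : G) ∉ R) (F F' : (G → ℝ) × (G → ℝ) → ENNReal)
    (h : ∀ p : (G → ℝ) × (G → ℝ), ∑ g, p.1 g = ∑ g, p.2 g → F p ≤ F' p) (N : ℕ)
    (p : (G → ℝ) × (G → ℝ)) (hp : ∑ g, p.1 g = ∑ g, p.2 g) :
    (K2 R)^[N] F p ≤ (K2 R)^[N] F' p := by
  induction N generalizing p with
  | zero => exact h p hp
  | succ N ih =>
    rw [Function.iterate_succ_apply', Function.iterate_succ_apply']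
    simp only [K2]
    refine mul_le_mul_right (Finset.sum_le_sum fun g _ => Finset.sum_le_sum fun r hr => ?_) _
    refine lintegral_mono fun l => ih _ ?_
    simp only
    rw [sum_st _ _ _ (edge_ne R hid g r hr) (by simp), sum_st _ _ _ (edge_ne R hid g r hr) (by simp),
      hp]

lemma measurable_K2 (R : Finset G) (F : (G → ℝ) × (G → ℝ) → ENNReal) (hF : Measurable F) :
    Measurable (K2 R F) := by
  unfold K2
  refine Measurable.const_mul ?_ _
  refine Finset.measurable_fun_sum _ fun g _ => Finset.measurable_fun_sum _ fun r _ => ?_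
  refine Measurable.lintegral_prod_right'
    (f := fun p : ((G → ℝ) × (G → ℝ)) × ℝ => F (st g (g * r) p.2 p.1.1, st g (g * r) p.2 p.1.2)) ?_
  refine hF.comp (Measurable.prodMk ?_ ?_)
  · exact (measurable_st g (g * r)).comp
      (f := fun p : ((G → ℝ) × (G → ℝ)) × ℝ => (p.1.1, p.2)) (by fun_prop)
  · exact (measurable_st g (g * r)).comp
      (f := fun p : ((G → ℝ) × (G → ℝ)) × ℝ => (p.1.2, p.2)) (by fun_prop)

lemma measurable_K2_iter (R : Finset G) (F : (G → ℝ) × (G → ℝ) → ENNReal) (hF : Measurable F)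
    (N : ℕ) : Measurable ((K2 R)^[N] F) := by
  induction N with
  | zero => exact hF
  | succ N ih => rw [Function.iterate_succ_apply']; exact measurable_K2 R _ ih

lemma K2_add (R : Finset G) (F F' : (G → ℝ) × (G → ℝ) → ENNReal) (hF : Measurable F) :
    K2 R (fun p => F p + F' p) = fun p => K2 R F p + K2 R F' p := by
  funext p
  simp only [K2]
  have : ∀ g r : G, ∫⁻ l, (F (st g (g * r) l p.1, st g (g * r) l p.2)
      + F' (st g (g * r) l p.1, st g (g * r) l p.2)) ∂I01
      = ∫⁻ l, F (st g (g * r) l p.1, st g (g * r) l p.2) ∂I01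
      + ∫⁻ l, F' (st g (g * r) l p.1, st g (g * r) l p.2) ∂I01 := by
    intro g r
    refine lintegral_add_left (hF.comp (Measurable.prodMk ?_ ?_)) _
    · exact (measurable_st g (g * r)).comp (measurable_prodMk_left)
    · exact (measurable_st g (g * r)).comp (measurable_prodMk_left)
  simp_rw [this, Finset.sum_add_distrib, mul_add]

lemma K2_iter_add (R : Finset G) (F F' : (G → ℝ) × (G → ℝ) → ENNReal) (hF : Measurable F)
    (N : ℕ) : (K2 R)^[N] (fun p => F p + F' p)
      = fun p => (K2 R)^[N] F p + (K2 R)^[N] F' p := by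
  induction N with
  | zero => rfl
  | succ N ih =>
    rw [Function.iterate_succ_apply', ih, K2_add R _ _ (measurable_K2_iter R F hF N),
      Function.iterate_succ_apply', Function.iterate_succ_apply']

lemma K2_iter_const (R : Finset G) (hne : R.Nonempty) (c : ENNReal) (N : ℕ) :
    (K2 R)^[N] (fun _ => c) = fun _ => c := by
  induction N with
  | zero => rfl
  | succ N ih =>
    rw [Function.iterate_succ_apply', ih]
    funext p
    simp only [K2, lintegral_const, measure_univ, mul_one]
    exact wE_sum R hne c

lemma Kop_UG (R : Finset G) (hid : (1 : G) ∉ R) (hne : R.Nonempty) (φ : (G → ℝ) → ENNReal)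
    (hφ : Measurable φ) : ∫⁻ y, Kop R φ y ∂(UG G) = ∫⁻ y, φ y ∂(UG G) := by
  unfold Kop
  have hm : ∀ g r : G, Measurable fun x => ∫⁻ l, φ (st g (g * r) l x) ∂I01 := fun g r =>
    Measurable.lintegral_prod_right'
    (f := fun p : (G → ℝ) × ℝ => φ (st g (g * r) p.2 p.1)) (hφ.comp (measurable_st g (g * r)))
  rw [lintegral_const_mul _ (Finset.measurable_fun_sum _ fun g _ =>
      Finset.measurable_fun_sum _ fun r _ => hm g r)]
  rw [lintegral_finsetSum _ fun g _ => Finset.measurable_fun_sum _ fun r _ => hm g r]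
  rw [← wE_sum R hne (∫⁻ y, φ y ∂(UG G))]
  congr 1
  refine Finset.sum_congr rfl fun g _ => ?_
  rw [lintegral_finsetSum _ fun r _ => hm g r]
  refine Finset.sum_congr rfl fun r hr => ?_
  exact simplex_resample _ _ (edge_ne R hid g r hr) φ hφ

lemma Kop_iter_UG (R : Finset G) (hid : (1 : G) ∉ R) (hne : R.Nonempty) (φ : (G → ℝ) → ENNReal)
    (hφ : Measurable φ) (N : ℕ) : ∫⁻ y, (Kop R)^[N] φ y ∂(UG G) = ∫⁻ y, φ y ∂(UG G) := by
  induction N with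
  | zero => rfl
  | succ N ih =>
    rw [Function.iterate_succ_apply', Kop_UG R hid hne _ (measurable_Kop_iter R φ hφ N), ih]

end Ops

section Law

variable {G : Type*} [Group G] [Fintype G] [DecidableEq G] [MeasurableSpace G]
  [DiscreteMeasurableSpace G]

lemma unifOn_prob {α : Type*} [MeasurableSpace α] (s : Finset α) (hs : s.Nonempty) :
    IsProbabilityMeasure (unifOn s) := ⟨by
  have : (s.card : ENNReal) ≠ 0 := by have := hs.card_pos; exact_mod_cast this.ne'
  simp only [unifOn, Measure.smul_apply, Measure.finsetSum_apply, measure_univ, Finset.sum_const,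
    nsmul_eq_mul, mul_one, smul_eq_mul]
  exact ENNReal.inv_mul_cancel this (ENNReal.natCast_ne_top _)⟩

lemma lintegral_unifOn {α : Type*} [MeasurableSpace α] [DiscreteMeasurableSpace α] (s : Finset α)
    (f : α → ENNReal) : ∫⁻ a, f a ∂(unifOn s) = (s.card : ENNReal)⁻¹ * ∑ a ∈ s, f a := by
  simp only [unifOn, lintegral_smul_measure, smul_eq_mul]
  rw [lintegral_finsetSum_measure]
  simp

lemma driveG_prob (R : Finset G) (hne : R.Nonempty) : IsProbabilityMeasure (driveG G R) := by
  haveI := unifOn_prob R hne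
  haveI := unifOn_prob (Finset.univ : Finset G) ⟨1, Finset.mem_univ _⟩
  unfold driveG
  infer_instance

lemma lintegral_driveG (R : Finset G) (hne : R.Nonempty) (f : G × G × ℝ → ENNReal)
    (hf : Measurable f) : ∫⁻ u, f u ∂(driveG G R)
      = wE R * ∑ g, ∑ r ∈ R, ∫⁻ l, f (g, r, l) ∂I01 := by
  haveI := unifOn_prob R hne
  haveI := unifOn_prob (Finset.univ : Finset G) ⟨1, Finset.mem_univ _⟩
  unfold driveG
  rw [lintegral_prod _ hf.aemeasurable, lintegral_unifOn, wE_eq R hne, mul_assoc,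
    Finset.card_univ]
  congr 1
  rw [Finset.mul_sum]
  refine Finset.sum_congr rfl fun g _ => ?_
  rw [lintegral_prod (fun y : G × ℝ => f (g, y)) (hf.comp measurable_prodMk_left).aemeasurable, lintegral_unifOn]

lemma measurable_gibbs : Measurable (fun p : (G → ℝ) × (G × G × ℝ) => gibbsStepG G p.1 p.2) := by
  have h : Measurable (fun p : G × (G × ((G → ℝ) × ℝ)) =>
      gibbsStepG G p.2.2.1 (p.1, p.2.1, p.2.2.2)) := by
    refine measurable_from_prod_countable_right fun g => ?_
    refine measurable_from_prod_countable_right fun r => ?_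
    exact measurable_st g (g * r)
  exact h.comp (f := fun p : (G → ℝ) × (G × G × ℝ) => (p.2.1, p.2.2.1, p.1, p.2.2.2)) (by fun_prop)

lemma measurable_fold (T : ℕ) : Measurable (fun p : (G → ℝ) × (Fin T → G × G × ℝ) =>
    (List.ofFn p.2).foldl (gibbsStepG G) p.1) := by
  induction T with
  | zero => simpa using measurable_fst
  | succ T ih =>
    simp only [List.ofFn_succ, List.foldl_cons]
    refine ih.comp (f := fun p : (G → ℝ) × (Fin (T + 1) → G × G × ℝ) =>
      (gibbsStepG G p.1 (p.2 0), fun i : Fin T => p.2 i.succ)) ?_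
    refine Measurable.prodMk ?_ ?_
    · exact measurable_gibbs.comp (f := fun p : (G → ℝ) × (Fin (T + 1) → G × G × ℝ) =>
        (p.1, p.2 0)) (by fun_prop)
    · fun_prop

lemma lawG_prob (R : Finset G) (hne : R.Nonempty) (x : G → ℝ) (T : ℕ) :
    IsProbabilityMeasure (lawG G R x T) := by
  haveI := driveG_prob R hne
  unfold lawG
  exact Measure.isProbabilityMeasure_map
    ((measurable_fold T).comp measurable_prodMk_left).aemeasurable

lemma lintegral_lawG (R : Finset G) (hne : R.Nonempty) (φ : (G → ℝ) → ENNReal)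
    (hφ : Measurable φ) (T : ℕ) (x : G → ℝ) :
    ∫⁻ y, φ y ∂(lawG G R x T) = (Kop R)^[T] φ x := by
  haveI := driveG_prob R hne
  have hm : ∀ T x, Measurable fun ω : Fin T → G × G × ℝ =>
      (List.ofFn ω).foldl (gibbsStepG G) x := fun T x =>
    (measurable_fold T).comp measurable_prodMk_left
  induction T generalizing x with
  | zero =>
    unfold lawG
    rw [lintegral_map hφ (hm _ _)]
    simp
  | succ T ih =>
    unfold lawG at ih ⊢
    rw [lintegral_map hφ (hm _ _)]
    have ih' : ∀ x, ∫⁻ ω, φ ((List.ofFn ω).foldl (gibbsStepG G) x)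
        ∂(Measure.pi fun _ : Fin T => driveG G R) = (Kop R)^[T] φ x := by
      intro x
      rw [← ih x, lintegral_map hφ (hm _ _)]
    have hmp := measurePreserving_piFinSuccAbove (fun _ : Fin (T + 1) => driveG G R) 0
    have hF : Measurable (fun q : (G × G × ℝ) × (Fin T → G × G × ℝ) =>
        φ ((List.ofFn q.2).foldl (gibbsStepG G) (gibbsStepG G x q.1))) := by
      refine hφ.comp ((measurable_fold T).comp
        (f := fun q : (G × G × ℝ) × (Fin T → G × G × ℝ) => (gibbsStepG G x q.1, q.2)) ?_)
      refine Measurable.prodMk ?_ measurable_snd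
      exact measurable_gibbs.comp (measurable_prodMk_left.comp measurable_fst)
    have h1 := hmp.lintegral_comp hF
    have h2 : ∀ ω : Fin (T + 1) → G × G × ℝ, φ ((List.ofFn ω).foldl (gibbsStepG G) x)
        = (fun q : (G × G × ℝ) × (Fin T → G × G × ℝ) =>
        φ ((List.ofFn q.2).foldl (gibbsStepG G) (gibbsStepG G x q.1)))
          (MeasurableEquiv.piFinSuccAbove (fun _ => G × G × ℝ) 0 ω) := by
      intro ω
      simp only [List.ofFn_succ, List.foldl_cons]
      rfl
    simp_rw [h2]
    rw [h1, lintegral_prod _ hF.aemeasurable]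
    simp only [ih']
    rw [lintegral_driveG R hne, Function.iterate_succ_apply']
    · rfl
    · exact (measurable_Kop_iter R φ hφ T).comp
        (measurable_gibbs.comp measurable_prodMk_left)

end Law

section Disc

variable {G : Type*} [Group G] [Fintype G] [DecidableEq G]

lemma sumsq_half (p q : G) (hpq : p ≠ q) (v : G → ℝ) :
    ∑ g, (st p q (1 / 2) v g) ^ 2 = ∑ g, v g ^ 2 - 1 / 2 * (v p - v q) ^ 2 := by
  rw [sum_split _ p q hpq, sum_split _ p q hpq (fun g => v g ^ 2),
    sum_erase_stv _ p q (fun g => (st p q (1 / 2) v g) ^ 2) (fun g => v g ^ 2)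
      (fun g h1 h2 => by simp [st, h1, h2])]
  simp [st, hpq.symm]
  ring

lemma wE_sum_ofReal (R : Finset G) (f : G → G → ℝ) (hf : ∀ g, ∀ r ∈ R, 0 ≤ f g r) :
    wE R * ∑ g, ∑ r ∈ R, ENNReal.ofReal (f g r) = ENNReal.ofReal (wR R * ∑ g, ∑ r ∈ R, f g r) := by
  rw [ENNReal.ofReal_mul (wR_nonneg R),
    ENNReal.ofReal_sum_of_nonneg (fun g _ => Finset.sum_nonneg fun r hr => hf g r hr)]
  unfold wE
  congr 1
  exact Finset.sum_congr rfl fun g _ => (ENNReal.ofReal_sum_of_nonneg (fun r hr => hf g r hr)).symm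

lemma wR_sum_const (R : Finset G) (hne : R.Nonempty) (c : ℝ) :
    wR R * ∑ _g : G, ∑ _r ∈ R, c = c := by
  simp only [Finset.sum_const, nsmul_eq_mul, Finset.card_univ]
  have h2 : (Fintype.card G : ℝ) ≠ 0 := by
    have : 0 < Fintype.card G := Fintype.card_pos_iff.2 ⟨1⟩
    positivity
  calc wR R * (Fintype.card G * (R.card * c)) = wR R * R.card * Fintype.card G * c := by ring
    _ = c := by rw [wR_mul R hne]; field_simp

lemma EL_Wav (R : Finset G) (hid : (1 : G) ∉ R) (hne : R.Nonempty)
    (hγ : gapHat G R ≤ 1) (N : ℕ) (v : G → ℝ) (hv : ∑ g, v g = 0) :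
    EL R N (fun L => ENNReal.ofReal (∑ g, (Wav L v g) ^ 2))
      ≤ ENNReal.ofReal ((1 - gapHat G R / 2) ^ N * ∑ g, v g ^ 2) := by
  have hc : 0 ≤ 1 - gapHat G R / 2 := by linarith
  induction N generalizing v with
  | zero => simp [EL, Wav]
  | succ N ih =>
    simp only [EL, Wav]
    have h1 : wE R * ∑ g, ∑ r ∈ R, EL R N
        (fun L => ENNReal.ofReal (∑ k, (Wav L (st g (g * r) (1 / 2) v) k) ^ 2))
        ≤ wE R * ∑ g, ∑ r ∈ R, ENNReal.ofReal ((1 - gapHat G R / 2) ^ N *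
          (∑ k, v k ^ 2 - 1 / 2 * (v (g * r) - v g) ^ 2)) := by
      refine mul_le_mul_right (Finset.sum_le_sum fun g _ => Finset.sum_le_sum fun r hr => ?_) _
      have hgr := edge_ne R hid g r hr
      refine (ih _ (by rw [sum_st _ _ _ hgr (by simp), hv])).trans (le_of_eq ?_)
      rw [sumsq_half _ _ hgr]
      congr 3
      ring
    refine h1.trans ?_
    rw [wE_sum_ofReal]
    · apply ENNReal.ofReal_le_ofReal
      have h2 : wR R * ∑ g, ∑ r ∈ R, ((1 - gapHat G R / 2) ^ N *
          (∑ k, v k ^ 2 - 1 / 2 * (v (g * r) - v g) ^ 2))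
          = (1 - gapHat G R / 2) ^ N * (∑ k, v k ^ 2 - 1 / 2 * (wR R * EE R v)) := by
        simp_rw [← Finset.mul_sum, Finset.sum_sub_distrib, ← Finset.mul_sum]
        have := wR_sum_const R hne (∑ k, v k ^ 2)
        unfold EE
        linear_combination (1 - gapHat G R / 2) ^ N * this
      rw [h2, pow_succ, mul_assoc]
      refine mul_le_mul_of_nonneg_left ?_ (pow_nonneg hc N)
      have := gap_ineq R hid hne v hv
      linarith
    · intro g r hr
      refine mul_nonneg (pow_nonneg hc N) ?_
      have e : (v (g * r) - v g) ^ 2 = (v g - v (g * r)) ^ 2 := by ring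
      rw [e, ← sumsq_half _ _ (edge_ne R hid g r hr)]
      exact Finset.sum_nonneg fun _ _ => sq_nonneg _

open Classical in
lemma EL_notConn (R : Finset G) (hid : (1 : G) ∉ R) (hne : R.Nonempty)
    (hγ : gapHat G R ≤ 1) (N : ℕ) :
    EL R N (fun L => if Conn L then 0 else 1)
      ≤ ENNReal.ofReal ((Fintype.card G : ℝ) ^ 2 * (1 - gapHat G R / 2) ^ N) := by
  have hn : 0 < (Fintype.card G : ℝ) := by
    have : 0 < Fintype.card G := Fintype.card_pos_iff.2 ⟨1⟩
    positivity
  set v : G → ℝ := fun g => (if g = 1 then 1 else 0) - 1 / (Fintype.card G : ℝ) with hvd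
  have hv : ∑ g, v g = 0 := by
    simp only [hvd, Finset.sum_sub_distrib, Finset.sum_const, nsmul_eq_mul, Finset.card_univ]
    simp
  have hv2 : ∑ g, v g ^ 2 ≤ 1 := by
    have h1 : ∀ g, v g ^ 2 = (if g = 1 then 1 else 0)
        - 1 / (Fintype.card G : ℝ) * (if g = 1 then 1 else 0) - 1 / (Fintype.card G : ℝ) * v g := by
      intro g
      simp only [hvd]
      split_ifs <;> ring
    simp_rw [h1, Finset.sum_sub_distrib, ← Finset.mul_sum, hv]
    simp
  calc EL R N (fun L => if Conn L then 0 else 1)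
      ≤ EL R N (fun L => ENNReal.ofReal ((Fintype.card G : ℝ) ^ 2) *
          ENNReal.ofReal (∑ g, (Wav L v g) ^ 2)) := by
        refine EL_mono R hid N _ _ fun L hL => ?_
        split_ifs with hc
        · exact zero_le
        · rw [← ENNReal.ofReal_mul (by positivity), ENNReal.one_le_ofReal]
          have h1 : 1 / (Fintype.card G : ℝ) ^ 2 ≤ ∑ g, (Wav L v g) ^ 2 := Wav_lower 1 L hL hc
          calc (1 : ℝ) = (Fintype.card G : ℝ) ^ 2 * (1 / (Fintype.card G : ℝ) ^ 2) := by
                field_simp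
            _ ≤ _ := mul_le_mul_of_nonneg_left h1 (by positivity)
    _ = ENNReal.ofReal ((Fintype.card G : ℝ) ^ 2) * EL R N (fun L =>
          ENNReal.ofReal (∑ g, (Wav L v g) ^ 2)) := EL_const_mul _ _ _ _
    _ ≤ ENNReal.ofReal ((Fintype.card G : ℝ) ^ 2) *
          ENNReal.ofReal ((1 - gapHat G R / 2) ^ N * ∑ g, v g ^ 2) :=
        mul_le_mul_right (EL_Wav R hid hne hγ N v hv) _
    _ ≤ _ := by
        rw [← ENNReal.ofReal_mul (by positivity)]
        apply ENNReal.ofReal_le_ofReal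
        have : 0 ≤ (1 - gapHat G R / 2) ^ N := pow_nonneg (by linarith) N
        exact mul_le_mul_of_nonneg_left (mul_le_of_le_one_right this hv2) (by positivity)

end Disc

section Contract

variable {G : Type*} [Group G] [Fintype G] [DecidableEq G]

/-- Conductances of the walk on differences. -/
def cc (k l : G) : ℝ := if k = 1 ∨ l = 1 then 2 / 3 else 1

/-- Weights on the group. -/
def pw (k : G) : ℝ := if k = 1 then 2 else 1

/-- Laplacian on differences. -/
def Lap (R : Finset G) (a : G → ℝ) (k : G) : ℝ :=
  ∑ r ∈ R, (cc k (k * r) * (a (k * r) - a k) + cc k (r * k) * (a (r * k) - a k))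

/-- Transition operator on differences. -/
def Nop (R : Finset G) (a : G → ℝ) (k : G) : ℝ := a k + wR R / pw k * Lap R a k

/-- Bilinear energy. -/
def QL (R : Finset G) (a f : G → ℝ) : ℝ :=
  ∑ r ∈ R, ∑ k, cc k (r * k) * ((a (r * k) - a k) * (f (r * k) - f k))

lemma cc_symm (k l : G) : cc k l = cc l k := by simp [cc, or_comm]
lemma cc_inv (k l : G) : cc k⁻¹ l⁻¹ = cc k l := by simp [cc]
lemma cc_le (k l : G) : cc k l ≤ 1 := by unfold cc; split_ifs <;> norm_num
lemma cc_ge (k l : G) : 2 / 3 ≤ cc k l := by unfold cc; split_ifs <;> norm_num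
lemma pw_inv (k : G) : pw k⁻¹ = pw k := by simp [pw]
lemma pw_ge (k : G) : 1 ≤ pw k := by unfold pw; split_ifs <;> norm_num
lemma pw_le (k : G) : pw k ≤ 2 := by unfold pw; split_ifs <;> norm_num

lemma pw_sum (f : G → ℝ) : ∑ k, pw k * f k = ∑ k, f k + f 1 := by
  have : ∀ k, pw k * f k = f k + if k = 1 then f 1 else 0 := by
    intro k; unfold pw; split_ifs with h
    · subst h; ring
    · ring
  simp_rw [this, Finset.sum_add_distrib]
  simp

lemma sum_R_inv (R : Finset G) (hsym : ∀ r ∈ R, r⁻¹ ∈ R) (f : G → ℝ) :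
    ∑ r ∈ R, f r⁻¹ = ∑ r ∈ R, f r :=
  Finset.sum_nbij' (fun r => r⁻¹) (fun r => r⁻¹) hsym hsym (by simp) (by simp) (by simp)

lemma sum_RL (R : Finset G) (hsym : ∀ r ∈ R, r⁻¹ ∈ R) (F : G → G → ℝ) :
    ∑ r ∈ R, ∑ k, F k (r * k) = ∑ r ∈ R, ∑ k, F (r * k) k := by
  rw [← sum_R_inv R hsym (fun r => ∑ k, F (r * k) k)]
  refine Finset.sum_congr rfl fun r _ => ?_
  rw [← sum_mulLeft r (fun k => F (r⁻¹ * k) k)]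
  simp

lemma sum_inv (f : G → ℝ) : ∑ k, f k⁻¹ = ∑ k, f k := Equiv.sum_comp (Equiv.inv G) f

lemma sum_RR (R : Finset G) (hsym : ∀ r ∈ R, r⁻¹ ∈ R) (F : G → G → ℝ)
    (hF : ∀ k l, F k⁻¹ l⁻¹ = F k l) :
    ∑ r ∈ R, ∑ k, F k (k * r) = ∑ r ∈ R, ∑ k, F k (r * k) := by
  rw [← sum_R_inv R hsym (fun r => ∑ k, F k (r * k))]
  refine Finset.sum_congr rfl fun r _ => ?_
  rw [← sum_inv]
  refine Finset.sum_congr rfl fun k _ => ?_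
  rw [← hF k (r⁻¹ * k)]; simp

lemma Lap_symm (R : Finset G) (hsym : ∀ r ∈ R, r⁻¹ ∈ R) (a : G → ℝ) (ha : ∀ k, a k⁻¹ = a k)
    (k : G) : Lap R a k⁻¹ = Lap R a k := by
  unfold Lap
  rw [← sum_R_inv R hsym]
  refine Finset.sum_congr rfl fun r _ => ?_
  rw [← mul_inv_rev, ← mul_inv_rev, cc_inv, cc_inv, ha, ha, ha, add_comm]

lemma Nop_symm (R : Finset G) (hsym : ∀ r ∈ R, r⁻¹ ∈ R) (a : G → ℝ) (ha : ∀ k, a k⁻¹ = a k)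
    (k : G) : Nop R a k⁻¹ = Nop R a k := by
  unfold Nop
  rw [ha, pw_inv, Lap_symm R hsym a ha]

lemma Lap_weak (R : Finset G) (hsym : ∀ r ∈ R, r⁻¹ ∈ R) (a f : G → ℝ) (ha : ∀ k, a k⁻¹ = a k)
    (hf : ∀ k, f k⁻¹ = f k) : ∑ k, f k * Lap R a k = - QL R a f := by
  have h1 : ∑ k, f k * Lap R a k
      = ∑ r ∈ R, ∑ k, f k * (cc k (k * r) * (a (k * r) - a k))
        + ∑ r ∈ R, ∑ k, f k * (cc k (r * k) * (a (r * k) - a k)) := by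
    unfold Lap
    simp_rw [Finset.mul_sum]
    rw [Finset.sum_comm, ← Finset.sum_add_distrib]
    refine Finset.sum_congr rfl fun r _ => ?_
    rw [← Finset.sum_add_distrib]
    refine Finset.sum_congr rfl fun k _ => by ring
  rw [sum_RR R hsym (fun k l => f k * (cc k l * (a l - a k)))
    (fun k l => by simp only [cc_inv, ha, hf])] at h1
  have h2 := sum_RL R hsym (fun k l => f k * (cc k l * (a l - a k)))
  rw [h1]
  nth_rewrite 1 [h2]
  unfold QL
  rw [← Finset.sum_add_distrib, ← Finset.sum_neg_distrib]
  refine Finset.sum_congr rfl fun r _ => ?_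
  rw [← Finset.sum_add_distrib, ← Finset.sum_neg_distrib]
  refine Finset.sum_congr rfl fun k _ => ?_
  rw [cc_symm (r * k) k]; ring

lemma EE_left (R : Finset G) (hsym : ∀ r ∈ R, r⁻¹ ∈ R) (a : G → ℝ) (ha : ∀ k, a k⁻¹ = a k) :
    EE R a = ∑ r ∈ R, ∑ k, (a (r * k) - a k) ^ 2 := by
  unfold EE
  rw [Finset.sum_comm]
  exact sum_RR R hsym (fun k l => (a l - a k) ^ 2) (fun k l => by simp only [ha])

lemma QL_ge (R : Finset G) (hsym : ∀ r ∈ R, r⁻¹ ∈ R) (a : G → ℝ) (ha : ∀ k, a k⁻¹ = a k) :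
    2 / 3 * EE R a ≤ QL R a a := by
  rw [EE_left R hsym a ha, QL]
  simp_rw [Finset.mul_sum]
  refine Finset.sum_le_sum fun r _ => Finset.sum_le_sum fun k _ => ?_
  rw [← sq]
  exact mul_le_mul_of_nonneg_right (cc_ge _ _) (sq_nonneg _)

lemma Lap_sq (R : Finset G) (hsym : ∀ r ∈ R, r⁻¹ ∈ R) (a : G → ℝ) (ha : ∀ k, a k⁻¹ = a k) :
    ∑ k, (Lap R a k) ^ 2 ≤ 4 * R.card * QL R a a := by
  have h1 : ∀ k, (Lap R a k) ^ 2 ≤ 2 * R.card * ∑ r ∈ R, (cc k (k * r) * (a (k * r) - a k) ^ 2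
      + cc k (r * k) * (a (r * k) - a k) ^ 2) := by
    intro k
    unfold Lap
    refine sq_sum_le_card_mul_sum_sq.trans ?_
    rw [mul_comm (2 : ℝ), mul_assoc]
    refine mul_le_mul_of_nonneg_left ?_ (by positivity)
    rw [Finset.mul_sum]
    refine Finset.sum_le_sum fun r _ => ?_
    have h2 : ∀ k l : G, ∀ t : ℝ, (cc k l * t) ^ 2 ≤ cc k l * t ^ 2 := by
      intro k l t
      have := cc_le k l
      have h3 := cc_ge k l
      have : cc k l ^ 2 ≤ cc k l := by nlinarith
      rw [mul_pow]
      exact mul_le_mul_of_nonneg_right this (sq_nonneg _)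
    have h4 := h2 k (k * r) (a (k * r) - a k)
    have h5 := h2 k (r * k) (a (r * k) - a k)
    nlinarith [sq_nonneg (cc k (k * r) * (a (k * r) - a k) - cc k (r * k) * (a (r * k) - a k))]
  refine (Finset.sum_le_sum fun k _ => h1 k).trans (le_of_eq ?_)
  rw [← Finset.mul_sum, Finset.sum_comm]
  simp_rw [Finset.sum_add_distrib]
  rw [sum_RR R hsym (fun k l => cc k l * (a l - a k) ^ 2)
    (fun k l => by simp only [cc_inv, ha])]
  unfold QL
  simp_rw [sq]
  ring

lemma Nop_mean (R : Finset G) (hsym : ∀ r ∈ R, r⁻¹ ∈ R) (a : G → ℝ) (ha : ∀ k, a k⁻¹ = a k) :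
    ∑ k, pw k * Nop R a k = ∑ k, pw k * a k := by
  have h : ∀ k, pw k * Nop R a k = pw k * a k + wR R * (1 * Lap R a k) := by
    intro k
    have := pw_ge k
    have : pw k ≠ 0 := by linarith
    unfold Nop; field_simp
  simp_rw [h, Finset.sum_add_distrib, ← Finset.mul_sum]
  have := Lap_weak R hsym a (fun _ => 1) ha (fun _ => rfl)
  have hq : QL R a (fun _ => 1) = 0 := by simp [QL]
  rw [← Finset.mul_sum] at this
  rw [this, hq]; ring

lemma poincare (R : Finset G) (hsym : ∀ r ∈ R, r⁻¹ ∈ R) (hid : (1 : G) ∉ R) (hne : R.Nonempty)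
    (hγ0 : 0 ≤ gapHat G R) (a : G → ℝ) (ha : ∀ k, a k⁻¹ = a k) (hm : ∑ k, pw k * a k = 0) :
    gapHat G R / 3 * ∑ k, pw k * a k ^ 2 ≤ wR R * QL R a a := by
  have hn : 0 < (Fintype.card G : ℝ) := by
    have : 0 < Fintype.card G := Fintype.card_pos_iff.2 ⟨1⟩
    positivity
  set b := (∑ k, a k) / (Fintype.card G : ℝ) with hb
  have h1 := gap_ineq R hid hne (fun k => a k - b) (by
    rw [Finset.sum_sub_distrib, Finset.sum_const, Finset.card_univ, nsmul_eq_mul, hb]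
    field_simp; ring)
  have h2 : EE R (fun k => a k - b) = EE R a := by
    unfold EE
    refine Finset.sum_congr rfl fun g _ => Finset.sum_congr rfl fun r _ => by ring
  have h3 : ∑ k, pw k * a k ^ 2 ≤ 2 * ∑ k, (a k - b) ^ 2 := by
    have h4 : ∑ k, pw k * a k ^ 2 ≤ ∑ k, pw k * (a k - b) ^ 2 := by
      have h5 : ∑ k, pw k * (a k - b) ^ 2
          = ∑ k, pw k * a k ^ 2 - 2 * b * ∑ k, pw k * a k + b ^ 2 * ∑ k : G, pw k := by
        rw [Finset.mul_sum, Finset.mul_sum, ← Finset.sum_sub_distrib, ← Finset.sum_add_distrib]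
        refine Finset.sum_congr rfl fun k _ => by ring
      rw [h5, hm]
      have : 0 ≤ ∑ k : G, pw k := Finset.sum_nonneg fun k _ => by linarith [pw_ge k]
      nlinarith [mul_nonneg (sq_nonneg b) this]
    refine h4.trans ?_
    rw [Finset.mul_sum]
    exact Finset.sum_le_sum fun k _ => mul_le_mul_of_nonneg_right (pw_le k) (sq_nonneg _)
  rw [h2] at h1
  have h6 := mul_le_mul_of_nonneg_left (QL_ge R hsym a ha) (wR_nonneg R)
  have h7 := mul_le_mul_of_nonneg_left h3 hγ0
  linarith

lemma Nop_contract (R : Finset G) (hsym : ∀ r ∈ R, r⁻¹ ∈ R) (hid : (1 : G) ∉ R)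
    (hne : R.Nonempty) (hn4 : 4 ≤ Fintype.card G)
    (hγ0 : 0 ≤ gapHat G R) (a : G → ℝ) (ha : ∀ k, a k⁻¹ = a k) (hm : ∑ k, pw k * a k = 0) :
    ∑ k, pw k * (Nop R a k) ^ 2 ≤ (1 - gapHat G R / 3) * ∑ k, pw k * a k ^ 2 := by
  have h1 : ∀ k, pw k * (Nop R a k) ^ 2 ≤ pw k * a k ^ 2 + 2 * wR R * (a k * Lap R a k)
      + wR R ^ 2 * (Lap R a k) ^ 2 := by
    intro k
    have hp := pw_ge k
    have hp0 : pw k ≠ 0 := by linarith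
    have e : pw k * (Nop R a k) ^ 2 = pw k * a k ^ 2 + 2 * wR R * (a k * Lap R a k)
      + wR R ^ 2 * (Lap R a k) ^ 2 / pw k := by
      unfold Nop; field_simp; ring
    rw [e]
    have := div_le_self (mul_nonneg (sq_nonneg (wR R)) (sq_nonneg (Lap R a k))) hp
    linarith
  refine (Finset.sum_le_sum fun k _ => h1 k).trans ?_
  rw [Finset.sum_add_distrib, Finset.sum_add_distrib, ← Finset.mul_sum, ← Finset.mul_sum,
    Lap_weak R hsym a a ha ha]
  have h2 := mul_le_mul_of_nonneg_left (Lap_sq R hsym a ha) (sq_nonneg (wR R))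
  have h3 := poincare R hsym hid hne hγ0 a ha hm
  have h4 : wR R ^ 2 * (4 * R.card * QL R a a) = 4 / (Fintype.card G : ℝ) * (wR R * QL R a a) := by
    have := wR_mul R hne
    linear_combination (4 * wR R * QL R a a) * this
  have h5 : 0 ≤ wR R * QL R a a := by
    refine mul_nonneg (wR_nonneg R) ((QL_ge R hsym a ha).trans' ?_)
    have := EE_nonneg R a
    linarith
  have h6 : 4 / (Fintype.card G : ℝ) ≤ 1 := by
    rw [div_le_one (by positivity)]
    exact_mod_cast hn4
  rw [h4] at h2
  have h7 := mul_le_mul_of_nonneg_right h6 h5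
  linarith

end Contract

section Contract2

variable {G : Type*} [Group G] [Fintype G] [DecidableEq G]

/-- Translation invariant quadratic form. -/
def Ph (a D : G → ℝ) : ℝ := ∑ g, ∑ h, D g * D h * a (g⁻¹ * h)

/-- Autocorrelation. -/
def Sc (D : G → ℝ) (k : G) : ℝ := ∑ g, D g * D (g * k)

/-- Linear cross term. -/
def Uc (a D : G → ℝ) (p q : G) : ℝ := ∑ h, D h * (a (p⁻¹ * h) - a (q⁻¹ * h))

lemma Ph_eq (a D : G → ℝ) : Ph a D = ∑ k, a k * Sc D k := by
  unfold Ph Sc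
  simp_rw [Finset.mul_sum]
  rw [Finset.sum_comm (s := Finset.univ) (t := Finset.univ) (f := fun k g => a k * (D g * D (g * k)))]
  refine Finset.sum_congr rfl fun g _ => ?_
  rw [← sum_mulLeft g]
  refine Finset.sum_congr rfl fun k _ => ?_
  rw [inv_mul_cancel_left]; ring

lemma Sc_inv (D : G → ℝ) (k : G) : Sc D k⁻¹ = Sc D k := by
  unfold Sc
  rw [← sum_mulRight k]
  refine Finset.sum_congr rfl fun g _ => ?_
  rw [mul_inv_cancel_right]; ring

lemma Sc_one (D : G → ℝ) : Sc D 1 = ∑ g, D g ^ 2 := by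
  simp [Sc, sq]

lemma Sc_abs (D : G → ℝ) (k : G) : |Sc D k| ≤ ∑ g, D g ^ 2 := by
  unfold Sc
  refine (Finset.abs_sum_le_sum_abs _ _).trans ?_
  have h : ∀ g, |D g * D (g * k)| ≤ 1 / 2 * D g ^ 2 + 1 / 2 * D (g * k) ^ 2 := by
    intro g
    rw [abs_le]
    constructor <;> nlinarith [sq_nonneg (D g - D (g * k)), sq_nonneg (D g + D (g * k))]
  refine (Finset.sum_le_sum fun g _ => h g).trans (le_of_eq ?_)
  rw [Finset.sum_add_distrib, ← Finset.mul_sum, ← Finset.mul_sum,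
    sum_mulRight k (fun g => D g ^ 2)]
  ring

lemma Ph_add (a D : G → ℝ) (ha : ∀ k, a k⁻¹ = a k) (p q : G) (t : ℝ) :
    Ph a (fun g => D g + t * ((if g = p then 1 else 0) - (if g = q then 1 else 0)))
      = Ph a D + 2 * t * Uc a D p q + t ^ 2 * (2 * (a 1 - a (p⁻¹ * q))) := by
  set u : G → ℝ := fun g => (if g = p then 1 else 0) - (if g = q then 1 else 0) with hu
  have e1 : ∑ g, ∑ h, u g * D h * a (g⁻¹ * h) = Uc a D p q := by
    unfold Uc
    rw [Finset.sum_comm]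
    refine Finset.sum_congr rfl fun h _ => ?_
    simp only [hu, sub_mul, Finset.sum_sub_distrib, ite_mul, one_mul, zero_mul]
    simp
    ring
  have e2 : ∑ g, ∑ h, D g * u h * a (g⁻¹ * h) = Uc a D p q := by
    rw [← e1, Finset.sum_comm]
    refine Finset.sum_congr rfl fun g _ => Finset.sum_congr rfl fun h _ => ?_
    rw [← ha (h⁻¹ * g), mul_inv_rev, inv_inv]; ring
  have e3 : ∑ g, ∑ h, u g * u h * a (g⁻¹ * h) = 2 * (a 1 - a (p⁻¹ * q)) := by
    have h1 : ∀ g, ∑ h, u g * u h * a (g⁻¹ * h) = u g * (a (g⁻¹ * p) - a (g⁻¹ * q)) := by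
      intro g
      have : ∀ h, u g * u h * a (g⁻¹ * h) = u g * (u h * a (g⁻¹ * h)) := fun h => by ring
      simp_rw [this, ← Finset.mul_sum]
      congr 1
      simp [hu, sub_mul, Finset.sum_sub_distrib]
    simp_rw [h1]
    simp [hu, sub_mul, Finset.sum_sub_distrib]
    rw [← ha (q⁻¹ * p)]
    simp; ring
  have e4 : Ph a (fun g => D g + t * u g) = Ph a D + t * (∑ g, ∑ h, D g * u h * a (g⁻¹ * h))
      + t * (∑ g, ∑ h, u g * D h * a (g⁻¹ * h))
      + t ^ 2 * ∑ g, ∑ h, u g * u h * a (g⁻¹ * h) := by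
    unfold Ph
    simp only [Finset.mul_sum, ← Finset.sum_add_distrib]
    refine Finset.sum_congr rfl fun g _ => Finset.sum_congr rfl fun h _ => by ring
  rw [e4, e1, e2, e3]; ring

lemma st_eq_add (p q : G) (hpq : p ≠ q) (l : ℝ) (D : G → ℝ) :
    st p q l D = fun g => D g + (l * (D p + D q) - D p) *
      ((if g = p then 1 else 0) - (if g = q then 1 else 0)) := by
  funext g
  unfold st
  by_cases h1 : g = p
  · subst h1; simp [hpq]
  · by_cases h2 : g = q
    · subst h2; simp [h1]; ring
    · simp [h1, h2]

lemma st_sub (p q : G) (l : ℝ) (x y : G → ℝ) :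
    (fun g => st p q l x g - st p q l y g) = st p q l (fun g => x g - y g) := by
  funext g
  unfold st
  split_ifs <;> ring

lemma lint_poly (A B C : ℝ) (h : ∀ l : ℝ, 0 ≤ A + B * l + C * l ^ 2) :
    ∫⁻ l, ENNReal.ofReal (A + B * l + C * l ^ 2) ∂I01 = ENNReal.ofReal (A + B / 2 + C / 3) ∧
      0 ≤ A + B / 2 + C / 3 := by
  have hinteg : Integrable (fun l : ℝ => A + B * l + C * l ^ 2) I01 :=
    (Continuous.integrableOn_Icc (by fun_prop))
  have hI : ∫ l, (A + B * l + C * l ^ 2) ∂I01 = A + B / 2 + C / 3 := by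
    rw [I01, integral_Icc_eq_integral_Ioc, ← intervalIntegral.integral_of_le zero_le_one]
    rw [intervalIntegral.integral_add, intervalIntegral.integral_add]
    · have hB : ∫ x in (0:ℝ)..1, B * x = B * (1 / 2) := by
        rw [intervalIntegral.integral_const_mul, integral_id]; norm_num
      rw [hB]
      simp only [intervalIntegral.integral_const, intervalIntegral.integral_const_mul, integral_pow]
      norm_num
      ring
    all_goals exact Continuous.intervalIntegrable (by fun_prop) _ _
  rw [← ofReal_integral_eq_lintegral_ofReal hinteg (Filter.Eventually.of_forall h), hI]
  exact ⟨rfl, hI ▸ integral_nonneg h⟩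

/-- One-edge average of the quadratic form. -/
def Av (a D : G → ℝ) (g r : G) : ℝ := Ph a D + (D (g * r) - D g) * Uc a D g (g * r)
  + 2 / 3 * (D g ^ 2 - D g * D (g * r) + D (g * r) ^ 2) * (a 1 - a r)

lemma lint_edge (a D : G → ℝ) (ha : ∀ k, a k⁻¹ = a k) (g r : G) (hgr : g ≠ g * r)
    (hpos : ∀ l, 0 ≤ Ph a (st g (g * r) l D)) :
    ∫⁻ l, ENNReal.ofReal (Ph a (st g (g * r) l D)) ∂I01 = ENNReal.ofReal (Av a D g r) ∧
      0 ≤ Av a D g r := by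
  set s := D g + D (g * r) with hs
  set U := Uc a D g (g * r) with hU
  have e : ∀ l, Ph a (st g (g * r) l D)
      = (Ph a D - 2 * D g * U + D g ^ 2 * (2 * (a 1 - a r)))
        + (2 * s * U - 2 * s * D g * (2 * (a 1 - a r))) * l
        + (s ^ 2 * (2 * (a 1 - a r))) * l ^ 2 := by
    intro l
    rw [st_eq_add _ _ hgr, Ph_add a D ha, inv_mul_cancel_left]
    ring
  simp_rw [e] at hpos ⊢
  have h := lint_poly _ _ _ hpos
  have e2 : Av a D g r = (Ph a D - 2 * D g * U + D g ^ 2 * (2 * (a 1 - a r)))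
        + (2 * s * U - 2 * s * D g * (2 * (a 1 - a r))) / 2
        + (s ^ 2 * (2 * (a 1 - a r))) / 3 := by
    unfold Av; rw [hs, ← hU]; ring
  rw [e2]; exact h

lemma cross_sum (a D : G → ℝ) (r : G) :
    ∑ g, (D (g * r) - D g) * Uc a D g (g * r)
      = - ∑ k, (a (r⁻¹ * k) - a k) * (Sc D (r⁻¹ * k) - Sc D k) := by
  have h1 : ∀ g, (D (g * r) - D g) * Uc a D g (g * r)
      = ∑ k, (a k - a (r⁻¹ * k)) * (D (g * r) * D (g * k) - D g * D (g * k)) := by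
    intro g
    unfold Uc
    rw [← sum_mulLeft g, Finset.mul_sum]
    refine Finset.sum_congr rfl fun k _ => ?_
    rw [inv_mul_cancel_left, mul_inv_rev, mul_assoc, inv_mul_cancel_left]; ring
  simp_rw [h1]
  rw [Finset.sum_comm, ← Finset.sum_neg_distrib]
  refine Finset.sum_congr rfl fun k _ => ?_
  rw [← Finset.mul_sum, Finset.sum_sub_distrib]
  have h2 : ∑ g, D (g * r) * D (g * k) = Sc D (r⁻¹ * k) := by
    unfold Sc
    rw [← sum_mulRight r (fun g => D g * D (g * (r⁻¹ * k)))]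
    refine Finset.sum_congr rfl fun g _ => ?_
    congr 2
    group
  rw [h2]
  change _ * (_ - Sc D k) = _
  ring

lemma QL_edge (a S : G → ℝ) (ha : ∀ k, a k⁻¹ = a k) (hS : ∀ k, S k⁻¹ = S k) (r : G) (hr : r ≠ 1) :
    ∑ k, cc k (r * k) * ((a (r * k) - a k) * (S (r * k) / pw (r * k) - S k / pw k))
      = ∑ k, (a (r * k) - a k) * (S (r * k) - S k) - 2 / 3 * ((a 1 - a r) * (2 * S 1 - S r)) := by
  have hr' : (1 : G) ≠ r⁻¹ := fun h => hr (by simpa using congrArg (·⁻¹) h.symm)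
  rw [sum_split Finset.univ 1 r⁻¹ hr', sum_split Finset.univ 1 r⁻¹ hr'
    (fun k => (a (r * k) - a k) * (S (r * k) - S k)),
    sum_erase_stv Finset.univ 1 r⁻¹ _ (fun k => (a (r * k) - a k) * (S (r * k) - S k))]
  · simp [cc, pw, hr, ha, hS]
    ring
  · intro k h1 h2
    have h3 : r * k ≠ 1 := fun h => h2 (eq_inv_of_mul_eq_one_right h)
    simp [cc, pw, h1, h3]

lemma Av_sum (R : Finset G) (hsym : ∀ r ∈ R, r⁻¹ ∈ R) (hid : (1 : G) ∉ R) (hne : R.Nonempty)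
    (a D : G → ℝ) (ha : ∀ k, a k⁻¹ = a k) :
    wR R * ∑ g, ∑ r ∈ R, Av a D g r = Ph (Nop R a) D := by
  have hN : Ph (Nop R a) D = Ph a D + wR R * ∑ k, (Sc D k / pw k) * Lap R a k := by
    rw [Ph_eq, Ph_eq, Finset.mul_sum, ← Finset.sum_add_distrib]
    refine Finset.sum_congr rfl fun k _ => ?_
    unfold Nop; ring
  rw [hN, Lap_weak R hsym a (fun k => Sc D k / pw k) ha (fun k => by
    simp only [Sc_inv, pw_inv])]
  have hQ : QL R a (fun k => Sc D k / pw k)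
      = ∑ r ∈ R, (∑ k, (a (r * k) - a k) * (Sc D (r * k) - Sc D k)
        - 2 / 3 * ((a 1 - a r) * (2 * Sc D 1 - Sc D r))) := by
    unfold QL
    refine Finset.sum_congr rfl fun r hr => ?_
    exact QL_edge a (Sc D) ha (Sc_inv D) r (fun h => hid (h ▸ hr))
  rw [hQ]
  have hA : ∑ g, ∑ r ∈ R, Av a D g r = ∑ _g : G, ∑ _r ∈ R, Ph a D
      + ∑ r ∈ R, ∑ g, (D (g * r) - D g) * Uc a D g (g * r)
      + ∑ r ∈ R, 2 / 3 * ((a 1 - a r) * (2 * Sc D 1 - Sc D r)) := by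
    unfold Av
    simp_rw [Finset.sum_add_distrib]
    rw [Finset.sum_comm (f := fun g r => (D (g * r) - D g) * Uc a D g (g * r)),
      Finset.sum_comm (f := fun g r => 2 / 3 * (D g ^ 2 - D g * D (g * r) + D (g * r) ^ 2)
        * (a 1 - a r))]
    congr 1
    refine Finset.sum_congr rfl fun r _ => ?_
    rw [← Finset.sum_mul, ← Finset.mul_sum, Finset.sum_add_distrib, Finset.sum_sub_distrib,
      sum_mulRight r (fun g => D g ^ 2), Sc_one]
    unfold Sc
    ring
  rw [hA, mul_add, mul_add, wR_sum_const R hne]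
  simp_rw [cross_sum]
  rw [sum_R_inv R hsym (fun r => - ∑ k, (a (r * k) - a k) * (Sc D (r * k) - Sc D k))]
  rw [Finset.sum_sub_distrib, Finset.sum_neg_distrib]
  ring

/-- Initial function. -/
def a0 (G : Type*) [Group G] [Fintype G] [DecidableEq G] (k : G) : ℝ :=
  (if k = 1 then 1 else 0) - 2 / ((Fintype.card G : ℝ) + 1)

lemma a0_props (R : Finset G) (hsym : ∀ r ∈ R, r⁻¹ ∈ R) (hid : (1 : G) ∉ R)
    (hne : R.Nonempty) (hn4 : 4 ≤ Fintype.card G)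
    (hγ0 : 0 ≤ gapHat G R) (hγ1 : gapHat G R ≤ 1) (t : ℕ) :
    (∀ k, (Nop R)^[t] (a0 G) k⁻¹ = (Nop R)^[t] (a0 G) k) ∧
    (∑ k, pw k * (Nop R)^[t] (a0 G) k = 0) ∧
    (∑ k, pw k * ((Nop R)^[t] (a0 G) k) ^ 2 ≤ (1 - gapHat G R / 3) ^ t * 2) := by
  induction t with
  | zero =>
    have hn : (0 : ℝ) < (Fintype.card G : ℝ) + 1 := by positivity
    have hm : ∑ k : G, pw k * a0 G k = 0 := by
      rw [pw_sum]
      simp [a0, Finset.sum_sub_distrib]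
      field_simp
      ring
    refine ⟨fun k => by simp [a0], hm, ?_⟩
    simp only [Function.iterate_zero, id, pow_zero, one_mul]
    have h : ∀ k : G, pw k * a0 G k ^ 2 = pw k * (if k = 1 then a0 G 1 else 0)
        - 2 / ((Fintype.card G : ℝ) + 1) * (pw k * a0 G k) := by
      intro k
      by_cases hk : k = 1
      · subst hk; simp [a0]; ring
      · simp [a0, hk]; ring
    simp_rw [h]
    rw [Finset.sum_sub_distrib, ← Finset.mul_sum, hm]
    simp only [mul_ite, mul_zero, Finset.sum_ite_eq', Finset.mem_univ, if_true, sub_zero]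
    have : 0 ≤ 2 / ((Fintype.card G : ℝ) + 1) := by positivity
    simp only [pw, a0, if_true]
    linarith
  | succ t ih =>
    obtain ⟨h1, h2, h3⟩ := ih
    simp only [Function.iterate_succ_apply']
    refine ⟨Nop_symm R hsym _ h1, by rw [Nop_mean R hsym _ h1, h2], ?_⟩
    refine (Nop_contract R hsym hid hne hn4 hγ0 _ h1 h2).trans ?_
    rw [pow_succ, mul_comm (_ ^ t), mul_assoc]
    exact mul_le_mul_of_nonneg_left h3 (by linarith)

lemma Ph_a0 (D : G → ℝ) (hD : ∑ g, D g = 0) : Ph (a0 G) D = ∑ g, D g ^ 2 := by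
  have h : Ph (a0 G) D = Sc D 1 - 2 / ((Fintype.card G : ℝ) + 1) * ∑ k, Sc D k := by
    rw [Ph_eq]
    unfold a0
    simp [sub_mul, Finset.sum_sub_distrib, Finset.mul_sum]
  have h2 : ∑ k, Sc D k = 0 := by
    unfold Sc
    rw [Finset.sum_comm]
    simp_rw [← Finset.mul_sum, sum_mulLeft, hD]
    simp
  rw [h, h2, Sc_one]; ring

lemma K2_Ph (R : Finset G) (hsym : ∀ r ∈ R, r⁻¹ ∈ R) (hid : (1 : G) ∉ R)
    (hne : R.Nonempty) (hn4 : 4 ≤ Fintype.card G)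
    (hγ0 : 0 ≤ gapHat G R) (hγ1 : gapHat G R ≤ 1) (t : ℕ) (p : (G → ℝ) × (G → ℝ))
    (hp : ∑ g, p.1 g = ∑ g, p.2 g) :
    (K2 R)^[t] (fun p => ENNReal.ofReal (∑ g, (p.1 g - p.2 g) ^ 2)) p
      = ENNReal.ofReal (Ph ((Nop R)^[t] (a0 G)) (fun g => p.1 g - p.2 g)) ∧
    0 ≤ Ph ((Nop R)^[t] (a0 G)) (fun g => p.1 g - p.2 g) := by
  induction t generalizing p with
  | zero =>
    have : ∑ g, (p.1 g - p.2 g) = 0 := by rw [Finset.sum_sub_distrib, hp, sub_self]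
    simp only [Function.iterate_zero, id]
    rw [Ph_a0 _ this]
    exact ⟨rfl, Finset.sum_nonneg fun _ _ => sq_nonneg _⟩
  | succ t ih =>
    obtain ⟨h1, -, -⟩ := a0_props R hsym hid hne hn4 hγ0 hγ1 t
    rw [Function.iterate_succ_apply', Function.iterate_succ_apply']
    set a := (Nop R)^[t] (a0 G)
    set D : G → ℝ := fun g => p.1 g - p.2 g with hD
    have key : ∀ g, ∀ r ∈ R, ∫⁻ l, (K2 R)^[t] (fun p => ENNReal.ofReal (∑ g, (p.1 g - p.2 g) ^ 2))
        (st g (g * r) l p.1, st g (g * r) l p.2) ∂I01 = ENNReal.ofReal (Av a D g r) ∧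
        0 ≤ Av a D g r := by
      intro g r hr
      have hgr := edge_ne R hid g r hr
      have hl := fun l => ih (st g (g * r) l p.1, st g (g * r) l p.2) (by
        simp only
        rw [sum_st _ _ _ hgr (by simp), sum_st _ _ _ hgr (by simp), hp])
      simp only [st_sub] at hl
      simp_rw [(hl _).1]
      exact lint_edge a D h1 g r hgr fun l => (hl l).2
    rw [← Av_sum R hsym hid hne a D h1]
    constructor
    · simp only [K2]
      rw [← wE_sum_ofReal R _ fun g r hr => (key g r hr).2]
      congr 1
      exact Finset.sum_congr rfl fun g _ => Finset.sum_congr rfl fun r hr => (key g r hr).1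
    · exact mul_nonneg (wR_nonneg R)
        (Finset.sum_nonneg fun g _ => Finset.sum_nonneg fun r hr => (key g r hr).2)

lemma K2_contract (R : Finset G) (hsym : ∀ r ∈ R, r⁻¹ ∈ R) (hid : (1 : G) ∉ R)
    (hne : R.Nonempty) (hn4 : 4 ≤ Fintype.card G)
    (hγ0 : 0 ≤ gapHat G R) (hγ1 : gapHat G R ≤ 1) (t : ℕ) (p : (G → ℝ) × (G → ℝ))
    (hp : ∑ g, p.1 g = ∑ g, p.2 g) :
    (K2 R)^[t] (fun p => ENNReal.ofReal (∑ g, (p.1 g - p.2 g) ^ 2)) p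
      ≤ ENNReal.ofReal ((∑ g, (p.1 g - p.2 g) ^ 2) *
        √(Fintype.card G * ((1 - gapHat G R / 3) ^ t * 2))) := by
  rw [(K2_Ph R hsym hid hne hn4 hγ0 hγ1 t p hp).1]
  obtain ⟨-, -, h3⟩ := a0_props R hsym hid hne hn4 hγ0 hγ1 t
  apply ENNReal.ofReal_le_ofReal
  set a := (Nop R)^[t] (a0 G)
  set D : G → ℝ := fun g => p.1 g - p.2 g with hD
  have h4 : Ph a D ≤ (∑ g, D g ^ 2) * ∑ k, |a k| := by
    rw [Ph_eq, Finset.mul_sum]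
    refine Finset.sum_le_sum fun k _ => (le_abs_self _).trans ?_
    rw [abs_mul, mul_comm]
    exact mul_le_mul_of_nonneg_right (Sc_abs D k) (abs_nonneg _)
  refine h4.trans (mul_le_mul_of_nonneg_left ?_ (Finset.sum_nonneg fun _ _ => sq_nonneg _))
  apply Real.le_sqrt_of_sq_le
  refine sq_sum_le_card_mul_sum_sq.trans ?_
  rw [Finset.card_univ]
  refine mul_le_mul_of_nonneg_left (h3.trans' ?_) (by positivity)
  refine Finset.sum_le_sum fun k _ => ?_
  rw [sq_abs]
  exact le_mul_of_one_le_left (sq_nonneg _) (pw_ge k)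

end Contract2

section Assembly

variable {G : Type*} [Group G] [Fintype G] [DecidableEq G]

lemma K2_iter_const_mul (R : Finset G) (c : ENNReal) (hc : c ≠ ⊤)
    (F : (G → ℝ) × (G → ℝ) → ENNReal) (N : ℕ) :
    (K2 R)^[N] (fun p => c * F p) = fun p => c * (K2 R)^[N] F p := by
  induction N with
  | zero => rfl
  | succ N ih =>
    rw [Function.iterate_succ_apply', Function.iterate_succ_apply', ih]
    funext p
    simp only [K2]
    simp_rw [lintegral_const_mul' _ _ hc, ← Finset.mul_sum]
    ring

open Classical in
lemma pointwise_bound (R : Finset G) (hid : (1 : G) ∉ R) (hne : R.Nonempty)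
    (φ : (G → ℝ) → ENNReal) (hφ : Measurable φ) (hφ1 : ∀ x, φ x ≤ 1) (ε : ℝ) (hε : 0 < ε) (N : ℕ)
    (x y : G → ℝ) (hxy : ∑ g, x g = ∑ g, y g) :
    (Kop R)^[N] φ x ≤ ((Kop R)^[N] φ y + EL R N (fun L => err ε L y)) +
      (EL R N (fun L => if Conn L then 0 else 1)
        + ENNReal.ofReal ((Fintype.card G : ℝ) / ε ^ 2) *
          ENNReal.ofReal (∑ g, (x g - y g) ^ 2)) := by
  rw [Kop_iter_EL R φ hφ, Kop_iter_EL R φ hφ]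
  by_cases hd : ∑ g, |x g - y g| ≤ ε
  · rw [← EL_add, ← add_assoc, ← EL_add]
    refine le_trans ?_ le_self_add
    refine EL_mono R hid N _ _ fun L hL => ?_
    split_ifs with hc
    · rw [add_zero]
      exact coupling_ev ε hε φ hφ hφ1 L hL x y (close_of_conn ε hε L hc x y hxy hd)
    · exact (ev_le_one L φ hφ1 x).trans le_add_self
  · refine le_trans ?_ (le_trans le_add_self le_add_self)
    calc EL R N (fun L => ev L φ x) ≤ EL R N (fun _ => 1) :=
          EL_mono R hid N _ _ fun L _ => ev_le_one L φ hφ1 x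
      _ = 1 := EL_const R hne N 1
      _ ≤ _ := by
        rw [← ENNReal.ofReal_mul (by positivity), ENNReal.one_le_ofReal]
        push Not at hd
        have h1 : (∑ g, |x g - y g|) ^ 2 ≤ Fintype.card G * ∑ g, (x g - y g) ^ 2 := by
          refine sq_sum_le_card_mul_sum_sq.trans (le_of_eq ?_)
          simp only [sq_abs, Finset.card_univ]
        have h2 : ε ^ 2 ≤ (∑ g, |x g - y g|) ^ 2 := by gcongr
        rw [div_mul_eq_mul_div, le_div_iff₀ (by positivity)]
        linarith

lemma simplex_dist (x y : G → ℝ) (hx : x ∈ simplexG G) (hy : y ∈ simplexG G) :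
    ∑ g, (x g - y g) ^ 2 ≤ 2 := by
  have hle : ∀ z ∈ simplexG G, ∀ g, z g ≤ 1 := by
    intro z hz g
    rw [← hz.2]
    exact Finset.single_le_sum (f := z) (fun h _ => hz.1 h) (Finset.mem_univ g)
  calc ∑ g, (x g - y g) ^ 2 ≤ ∑ g, (x g + y g) := by
        refine Finset.sum_le_sum fun g _ => ?_
        have h1 := hx.1 g
        have h2 := hy.1 g
        have h3 := hle x hx g
        have h4 := hle y hy g
        nlinarith [mul_nonneg h1 h2]
    _ = 2 := by rw [Finset.sum_add_distrib, hx.2, hy.2]; norm_num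

lemma main_ineq (R : Finset G) (hsym : ∀ r ∈ R, r⁻¹ ∈ R) (hid : (1 : G) ∉ R) (hne : R.Nonempty)
    (hn4 : 4 ≤ Fintype.card G) (hγ0 : 0 ≤ gapHat G R) (hγ1 : gapHat G R ≤ 1)
    (φ : (G → ℝ) → ENNReal) (hφ : Measurable φ) (hφ1 : ∀ x, φ x ≤ 1) (ε : ℝ) (hε : 0 < ε)
    (N M : ℕ) (x : G → ℝ) (hx : x ∈ simplexG G) :
    (Kop R)^[M + N] φ x ≤ ∫⁻ y, φ y ∂(UG G)
      + ENNReal.ofReal (3 * (Fintype.card G : ℝ) ^ 2 * ε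
        + (Fintype.card G : ℝ) ^ 2 * (1 - gapHat G R / 2) ^ N
        + (Fintype.card G : ℝ) / ε ^ 2 *
          (2 * √(Fintype.card G * ((1 - gapHat G R / 3) ^ M * 2)))) := by
  classical
  haveI := UG_prob (1 : G)
  set n : ℝ := (Fintype.card G : ℝ) with hn
  have hn0 : 0 ≤ n := by positivity
  set ψ := (Kop R)^[N] φ with hψ
  have hψm : Measurable ψ := measurable_Kop_iter R φ hφ N
  set E : (G → ℝ) → ENNReal := fun y => EL R N (fun L => err ε L y) with hE
  have hEm : Measurable E := measurable_EL R N (fun L => err ε L) fun L => measurable_err ε L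
  set q := EL R N (fun L => if Conn L then 0 else 1) with hq
  set s := √(n * ((1 - gapHat G R / 3) ^ M * 2)) with hs
  have hs0 : 0 ≤ s := Real.sqrt_nonneg _
  have step : ∀ y ∈ simplexG G, (Kop R)^[M + N] φ x ≤ (Kop R)^[M] (fun y => ψ y + E y) y
      + (q + ENNReal.ofReal (n / ε ^ 2) * ENNReal.ofReal (2 * s)) := by
    intro y hy
    have hsum : ∑ g, x g = ∑ g, y g := by rw [hx.2, hy.2]
    have h1 := K2_iter_mono R hid (fun p => ψ p.1)
      (fun p => (ψ p.2 + E p.2) + (q + ENNReal.ofReal (n / ε ^ 2) *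
          ENNReal.ofReal (∑ g, (p.1 g - p.2 g) ^ 2)))
      (fun p hp => pointwise_bound R hid hne φ hφ hφ1 ε hε N p.1 p.2 hp) M (x, y) hsum
    rw [K2_iter_fst R ψ M (x, y)] at h1
    rw [Function.iterate_add_apply]
    refine h1.trans ?_
    rw [K2_iter_add R (fun p => ψ p.2 + E p.2) _
      ((hψm.comp measurable_snd).add (hEm.comp measurable_snd)),
      K2_iter_add R (fun _ => q) _ measurable_const, K2_iter_const R hne,
      K2_iter_const_mul R _ ENNReal.ofReal_ne_top]
    simp only
    rw [K2_iter_snd R (fun y => ψ y + E y) M (x, y)]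
    gcongr
    refine (K2_contract R hsym hid hne hn4 hγ0 hγ1 M (x, y) hsum).trans ?_
    apply ENNReal.ofReal_le_ofReal
    exact mul_le_mul_of_nonneg_right (simplex_dist x y hx hy) hs0
  have h2 : (Kop R)^[M + N] φ x ≤ ∫⁻ y, ((Kop R)^[M] (fun y => ψ y + E y) y
      + (q + ENNReal.ofReal (n / ε ^ 2) * ENNReal.ofReal (2 * s))) ∂(UG G) := by
    calc (Kop R)^[M + N] φ x = ∫⁻ _y, (Kop R)^[M + N] φ x ∂(UG G) := by simp
      _ ≤ _ := lintegral_mono_ae (by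
        filter_upwards [UG_ae (α := G)] with y hy using step y hy)
  have hEint : ∫⁻ y, E y ∂(UG G) ≤ ENNReal.ofReal (3 * n ^ 2 * ε) := by
    have e := EL_lintegral (UG G) R N (fun L => err ε L) fun L => measurable_err ε L
    rw [hE, e]
    calc EL R N (fun L => ∫⁻ b, err ε L b ∂(UG G))
        ≤ EL R N (fun _ => (Fintype.card G : ENNReal) * ENNReal.ofReal (n * (3 * ε))) := by
          refine EL_mono R hid N _ _ fun L hL => ?_
          refine le_trans le_self_add (lintegral_err_le (UG G)
            (fun p q hpq f hf => simplex_resample p q hpq f hf) ε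
            (ENNReal.ofReal (n * (3 * ε))) (fun g => UG_small g (3 * ε) (by positivity)) L hL)
      _ = _ := by
        rw [EL_const R hne, ← ENNReal.ofReal_natCast, ← ENNReal.ofReal_mul (by positivity)]
        congr 1
        rw [← hn]; ring
  have hqb := EL_notConn R hid hne hγ1 N
  rw [lintegral_add_right _ measurable_const, lintegral_const, measure_univ, mul_one,
    Kop_iter_UG R hid hne (fun y => ψ y + E y) (hψm.add hEm), lintegral_add_left hψm,
    hψ, Kop_iter_UG R hid hne φ hφ] at h2
  refine h2.trans ?_
  rw [add_assoc]
  refine add_le_add_right ?_ _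
  have hp : 0 ≤ (1 - gapHat G R / 2) ^ N := pow_nonneg (by linarith) N
  rw [ENNReal.ofReal_add (by positivity) (by positivity),
    ENNReal.ofReal_add (by positivity) (by positivity), add_assoc]
  refine add_le_add hEint (add_le_add hqb (le_of_eq ?_))
  exact (ENNReal.ofReal_mul (by positivity)).symm

lemma numeric (n γ C T : ℝ) (N M : ℕ) (hn : 4096 < n) (hγ0 : 0 < γ) (hγ1 : γ ≤ 1)
    (hC : 103 / 4 < C) (hT : 8 * C / γ * Real.log n < T) (hM : T / 2 ≤ M) (hN : T / 2 - 1 / 2 ≤ N) :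
    3 * n ^ 2 * Real.exp (-(γ * M / 18)) + n ^ 2 * (1 - γ / 2) ^ N
      + n / Real.exp (-(γ * M / 18)) ^ 2 * (2 * √(n * ((1 - γ / 3) ^ M * 2)))
      ≤ 7 * n ^ (4.5 - C / 6) := by
  have hn0 : 0 < n := by linarith
  have hlog : 1 ≤ Real.log n := by
    rw [Real.le_log_iff_exp_le hn0]
    have := Real.exp_one_lt_d9
    linarith
  have hγT : 8 * C * Real.log n < γ * T := by
    have h := mul_lt_mul_of_pos_left hT hγ0
    have e : γ * (8 * C / γ * Real.log n) = 8 * C * Real.log n := by field_simp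
    linarith
  have hγM : 4 * C * Real.log n ≤ γ * M := by nlinarith
  have hγN : 4 * C * Real.log n - 1 / 2 ≤ γ * N := by nlinarith
  have hCl : 0 ≤ C * Real.log n := by nlinarith
  have hCl2 : 25 ≤ C * Real.log n := by nlinarith
  set z := Real.exp (-(C / 6 * Real.log n)) with hz
  have hz0 : 0 < z := Real.exp_pos _
  have hzn : z = n ^ (-(C / 6)) := by
    rw [Real.rpow_def_of_pos hn0, hz]; congr 1; ring
  set ε := Real.exp (-(γ * M / 18)) with hε
  have hε0 : 0 < ε := Real.exp_pos _
  have h1 : ε ≤ z := by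
    apply Real.exp_le_exp.2; linarith
  have h2 : (1 - γ / 2) ^ N ≤ z := by
    have h3 : 1 - γ / 2 ≤ Real.exp (-(γ / 2)) := by
      have := Real.add_one_le_exp (-(γ / 2)); linarith
    calc (1 - γ / 2) ^ N ≤ (Real.exp (-(γ / 2))) ^ N := pow_le_pow_left₀ (by linarith) h3 N
      _ = Real.exp (N * (-(γ / 2))) := (Real.exp_nat_mul _ _).symm
      _ ≤ z := by apply Real.exp_le_exp.2; linarith
  have h3 : √(n * ((1 - γ / 3) ^ M * 2)) ≤ n * ε ^ 3 := by
    have h4 : 1 - γ / 3 ≤ Real.exp (-(γ / 3)) := by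
      have := Real.add_one_le_exp (-(γ / 3)); linarith
    have h5 : (1 - γ / 3) ^ M ≤ ε ^ 6 := by
      calc (1 - γ / 3) ^ M ≤ (Real.exp (-(γ / 3))) ^ M := pow_le_pow_left₀ (by linarith) h4 M
        _ = ε ^ 6 := by
          rw [hε, ← Real.exp_nat_mul, ← Real.exp_nat_mul]; congr 1; push_cast; ring
    rw [Real.sqrt_le_left (by positivity)]
    calc n * ((1 - γ / 3) ^ M * 2) ≤ n * (ε ^ 6 * 2) := by gcongr
      _ = (2 * n) * ε ^ 6 := by ring
      _ ≤ (n ^ 2) * ε ^ 6 := by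
        apply mul_le_mul_of_nonneg_right _ (by positivity)
        nlinarith
      _ = _ := by ring
  have h4 : n / ε ^ 2 * (2 * √(n * ((1 - γ / 3) ^ M * 2))) ≤ 2 * n ^ 2 * ε := by
    calc n / ε ^ 2 * (2 * √(n * ((1 - γ / 3) ^ M * 2))) ≤ n / ε ^ 2 * (2 * (n * ε ^ 3)) := by
          gcongr
      _ = 2 * n ^ 2 * ε := by field_simp
  have h5 : n ^ (4.5 - C / 6) = n ^ (4.5 : ℝ) * z := by
    rw [hzn, ← Real.rpow_add hn0]; congr 1
  have h6 : n ^ 2 ≤ n ^ (4.5 : ℝ) := by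
    rw [← Real.rpow_natCast]
    apply Real.rpow_le_rpow_of_exponent_le (by linarith); norm_num
  rw [h5]
  have h7 : n ^ 2 * ε ≤ n ^ 2 * z := by gcongr
  have h8 : n ^ 2 * (1 - γ / 2) ^ N ≤ n ^ 2 * z := by gcongr
  have h9 : n ^ 2 * z ≤ n ^ (4.5 : ℝ) * z := by gcongr
  have h10 : 0 ≤ n ^ 2 * z := by positivity
  linarith

end Assembly

/-- Convergence rate (upper bound) for the Gibbs sampler on the simplex with geometry. -/
theorem gibbs_sampler_cayley_upper_bound
    (R : Finset G) (hsym : ∀ r ∈ R, r⁻¹ ∈ R) (hid : (1 : G) ∉ R) (hne : R.Nonempty)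
    (hgen : Subgroup.closure (R : Set G) = ⊤)
    (C : ℝ) (hC : 103 / 4 < C)
    (hn1 : 4096 < Fintype.card G)
    (hn2 : C / 3 + 10 / 3 < (Fintype.card G : ℝ))
    (hn3 : (C / 3 - 13 / 12) * Real.log (Fintype.card G) < (Fintype.card G : ℝ))
    (x : G → ℝ) (hx : x ∈ simplexG G)
    (T : ℕ) (hT : 8 * C / gapHat G R * Real.log (Fintype.card G) < (T : ℝ)) :
    tvDist (lawG G R x T) (UG G) ≤ 7 * (Fintype.card G : ℝ) ^ (4.5 - C / 6) := by
  have hn4 : 4 ≤ Fintype.card G := by omega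
  have hγ0 := gap_pos R hid hne hgen
  have hnR : (4096 : ℝ) < (Fintype.card G : ℝ) := by exact_mod_cast hn1
  have hγ1 : gapHat G R ≤ 1 := by
    refine (gap_le R hid hne).trans ?_
    rw [div_le_one (by linarith)]
    linarith
  have hM : (T : ℝ) / 2 ≤ ((T - T / 2 : ℕ) : ℝ) := by
    have : T ≤ 2 * (T - T / 2) := by omega
    have : (T : ℝ) ≤ 2 * ((T - T / 2 : ℕ) : ℝ) := by exact_mod_cast this
    linarith
  have hN : (T : ℝ) / 2 - 1 / 2 ≤ ((T / 2 : ℕ) : ℝ) := by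
    have : T ≤ 2 * (T / 2) + 1 := by omega
    have : (T : ℝ) ≤ 2 * ((T / 2 : ℕ) : ℝ) + 1 := by exact_mod_cast this
    linarith
  have hnum := numeric (Fintype.card G : ℝ) (gapHat G R) C T (T / 2) (T - T / 2) hnR hγ0 hγ1 hC hT
    hM hN
  have hUp := UG_prob (1 : G)
  have hLp := lawG_prob R hne x T
  unfold tvDist
  haveI : Nonempty {A : Set (G → ℝ) // MeasurableSet A} := ⟨⟨∅, MeasurableSet.empty⟩⟩
  refine ciSup_le fun A => ?_
  obtain ⟨A, hA⟩ := A
  simp only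
  have hφ : Measurable (A.indicator (fun _ => (1 : ENNReal))) := measurable_const.indicator hA
  have h1 := main_ineq R hsym hid hne hn4 hγ0.le hγ1 (A.indicator (fun _ => (1 : ENNReal))) hφ
    (fun y => Set.indicator_le_self' (fun _ _ => zero_le) y)
    (Real.exp (-(gapHat G R * ((T - T / 2 : ℕ) : ℝ) / 18))) (Real.exp_pos _)
    (T / 2) (T - T / 2) x hx
  have hTT : T - T / 2 + T / 2 = T := by omega
  rw [hTT, ← lintegral_lawG R hne _ hφ, lintegral_indicator_const hA, lintegral_indicator_const hA,
    one_mul, one_mul] at h1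
  have h2 := h1.trans (add_le_add_right (ENNReal.ofReal_le_ofReal hnum) _)
  have h0 : 0 ≤ 7 * (Fintype.card G : ℝ) ^ (4.5 - C / 6) := by positivity
  have h3 := ENNReal.toReal_mono
    (ENNReal.add_ne_top.2 ⟨measure_ne_top _ _, ENNReal.ofReal_ne_top⟩) h2
  rw [ENNReal.toReal_add (measure_ne_top _ _) ENNReal.ofReal_ne_top, ENNReal.toReal_ofReal h0] at h3
  linarith

end
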